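/- Strong converse for the K-hop problem: for every K ≥ 2, rates R₁,…,R_K ≥ 0, and type-I thresholds ε₁,…,ε_K ∈ [0,1), every (ε₁,…,ε_K)-achievable exponent tuple (θ₁,…,θ_K) satisfies θ_k ≤ ∑_{ℓ=1}^{k} η_ℓ(R_ℓ) for every k ∈ {1,…,K}. -/

import Mathlib

open Filter

noncomputable section

/-- `p` is a probability mass function on the finite alphabet `α`. -/
def IsPMF {α : Type*} [Fintype α] (p : α → ℝ) : Prop :=
  (∀ a, 0 ≤ p a) ∧ ∑ a, p a = 1

open Classical in
/-- Probability that the random variable `X` takes the value `a`, under the pmf `p`. -/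
def probEq {Ω α : Type*} [Fintype Ω] (p : Ω → ℝ) (X : Ω → α) (a : α) : ℝ :=
  ∑ ω, if X ω = a then p ω else 0

/-- Shannon entropy (base 2) of the random variable `X` under the pmf `p`. -/
def entOf {Ω α : Type*} [Fintype Ω] (p : Ω → ℝ) (X : Ω → α) : ℝ :=
  -∑ ω, p ω * Real.logb 2 (probEq p X (X ω))

/-- Mutual information `I(X ; Y)` under the pmf `p`. -/
def miOf {Ω α β : Type*} [Fintype Ω] (p : Ω → ℝ) (X : Ω → α) (Y : Ω → β) : ℝ :=
  entOf p X + entOf p Y - entOf p (fun ω => (X ω, Y ω))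

section KHop

variable (K : ℕ) (Y : ℕ → Type) [∀ i, Fintype (Y i)] [∀ i, Nonempty (Y i)]

/-- The index `j` viewed as an element of `Fin (K+1)` (the index of `Y_{ℓ-1}` for the
`ℓ = j+1`-th hop). -/
def idxLo (j : Fin K) : Fin (K + 1) := ⟨(j : ℕ), Nat.lt_succ_of_lt j.isLt⟩

/-- The index `j+1` viewed as an element of `Fin (K+1)`. -/
def idxHi (j : Fin K) : Fin (K + 1) := ⟨(j : ℕ) + 1, Nat.succ_lt_succ j.isLt⟩

variable (P : (∀ i : Fin (K + 1), Y i) → ℝ)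

/-- The i.i.d. law of the source tuple `(Y₀ⁿ,…,Y_Kⁿ)` under hypothesis `H = 0`. -/
def iidK (n : ℕ) (ys : ∀ i : Fin (K + 1), Fin n → Y i) : ℝ :=
  ∏ t : Fin n, P (fun i => ys i t)

open Classical in
/-- The marginal pmf of `Y_i` under `P`. -/
def margK (i : Fin (K + 1)) (c : Y i) : ℝ :=
  ∑ y : ∀ i : Fin (K + 1), Y i, if y i = c then P y else 0

/-- The product of the marginals `P_{Y₀}·P_{Y₁}⋯P_{Y_K}`. -/
def prodMargK (y : ∀ i : Fin (K + 1), Y i) : ℝ := ∏ i, margK K Y P i (y i)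

/-- The i.i.d. law of the source tuple under hypothesis `H = 1` (product of marginals). -/
def iidQK (n : ℕ) (ys : ∀ i : Fin (K + 1), Fin n → Y i) : ℝ :=
  ∏ t : Fin n, prodMargK K Y P (fun i => ys i t)

open Classical in
/-- The pairwise marginal `P_{Y_j Y_{j+1}}` of `P`. -/
def pairMargK (j : Fin K) (a : Y (j : ℕ)) (b : Y ((j : ℕ) + 1)) : ℝ :=
  ∑ y : ∀ i : Fin (K + 1), Y i, if y (idxLo K j) = a ∧ y (idxHi K j) = b then P y else 0

open Classical in
/-- `P` forms the Markov chain `Y₀ → Y₁ → ⋯ → Y_K`. -/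
def IsMarkovChainK : Prop :=
  ∀ y : ∀ i : Fin (K + 1), Y i,
    P y * ∏ i ∈ Finset.univ.filter (fun i : Fin (K + 1) => 0 < (i : ℕ) ∧ (i : ℕ) < K),
        margK K Y P i (y i)
      = ∏ j : Fin K, pairMargK K Y P j (y (idxLo K j)) (y (idxHi K j))

/-- The set of mutual-information values `I(U;Y_{j+1})` attainable by conditional pmfs
`P_{U|Y_j}` (on a finite auxiliary alphabet) with `I(U;Y_j) ≤ R`, computed under
`P_{U|Y_j}·P_{Y_j Y_{j+1}}`. -/
def etaSetK (j : Fin K) (R : ℝ) : Set ℝ :=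
  {r | ∃ (m : ℕ) (PU : Y (j : ℕ) → Fin m → ℝ),
      (∀ a, IsPMF (PU a)) ∧
      miOf (fun q : Fin m × Y (j : ℕ) × Y ((j : ℕ) + 1) =>
          PU q.2.1 q.1 * pairMargK K Y P j q.2.1 q.2.2)
        (fun q => q.1) (fun q => q.2.1) ≤ R ∧
      r = miOf (fun q : Fin m × Y (j : ℕ) × Y ((j : ℕ) + 1) =>
          PU q.2.1 q.1 * pairMargK K Y P j q.2.1 q.2.2)
        (fun q => q.1) (fun q => q.2.2)}

/-- The function `η_{j+1}(R) = max I(U;Y_{j+1})` over `P_{U|Y_j}` with `I(U;Y_j) ≤ R`. -/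
def etaK (j : Fin K) (R : ℝ) : ℝ := sSup (etaSetK K Y P j R)

/-- Extension of a source tuple to all natural indices (junk beyond `K`). -/
def extendTup (n : ℕ) (ys : ∀ i : Fin (K + 1), Fin n → Y i) (ℓ : ℕ) : Fin n → Y ℓ :=
  if h : ℓ < K + 1 then ys ⟨ℓ, h⟩ else fun _ => Classical.arbitrary (Y ℓ)

/-- The messages computed recursively from the encoders:
`msgRec φ ys' ℓ` is the message `M_{ℓ+1}`, i.e. `M₁ = φ₀(Y₀ⁿ)` and
`M_{ℓ+2} = φ_{ℓ+1}(Y_{ℓ+1}ⁿ, M_{ℓ+1})`. -/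
def msgRec (n : ℕ) (φ : ∀ ℓ : ℕ, (Fin n → Y ℓ) → ℕ → ℕ)
    (ys' : ∀ ℓ : ℕ, Fin n → Y ℓ) : ℕ → ℕ
  | 0 => φ 0 (ys' 0) 0
  | (ℓ + 1) => φ (ℓ + 1) (ys' (ℓ + 1)) (msgRec n φ ys' ℓ)

open Classical in
/-- The type-I error probability `α_{j+1,n} = Pr[Ĥ_{j+1} = 1 | H = 0]` (decisions output
`true` for the guess `Ĥ = 1`). -/
def alphaK (n : ℕ) (φ : ∀ ℓ : ℕ, (Fin n → Y ℓ) → ℕ → ℕ)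
    (g : ∀ m : ℕ, (Fin n → Y m) → ℕ → Bool) (j : Fin K) : ℝ :=
  ∑ ys : ∀ i : Fin (K + 1), Fin n → Y i,
    if g ((j : ℕ) + 1) (extendTup K Y n ys ((j : ℕ) + 1))
        (msgRec Y n φ (extendTup K Y n ys) (j : ℕ)) = true
    then iidK K Y P n ys else 0

open Classical in
/-- The type-II error probability `β_{j+1,n} = Pr[Ĥ_{j+1} = 0 | H = 1]`. -/
def betaK (n : ℕ) (φ : ∀ ℓ : ℕ, (Fin n → Y ℓ) → ℕ → ℕ)
    (g : ∀ m : ℕ, (Fin n → Y m) → ℕ → Bool) (j : Fin K) : ℝ :=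
  ∑ ys : ∀ i : Fin (K + 1), Fin n → Y i,
    if g ((j : ℕ) + 1) (extendTup K Y n ys ((j : ℕ) + 1))
        (msgRec Y n φ (extendTup K Y n ys) (j : ℕ)) = false
    then iidQK K Y P n ys else 0

/-- The exponent tuple `θ` is `(ε₁,…,ε_K)`-achievable with rates `(R₁,…,R_K)`:
there exists a sequence of encoders and decision functions whose messages satisfy
`len(M_k) ≤ nR_k` (i.e. `M_k` takes fewer than `2^{nR_k}+1` values), whose type-I error
probabilities satisfy `limsup α_{k,n} ≤ ε_k`, and whose type-II error probabilities
satisfy `liminf (1/n)·log(1/β_{k,n}) ≥ θ_k` for every `k`. -/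
def achievableK (Rr εr θ : Fin K → ℝ) : Prop :=
  ∃ (φ : ∀ n : ℕ, ∀ ℓ : ℕ, (Fin n → Y ℓ) → ℕ → ℕ)
    (g : ∀ n : ℕ, ∀ m : ℕ, (Fin n → Y m) → ℕ → Bool),
    (∀ n : ℕ, ∀ j : Fin K, ∀ ys : ∀ i : Fin (K + 1), Fin n → Y i,
        ((msgRec Y n (φ n) (extendTup K Y n ys) (j : ℕ) : ℕ) : ℝ) + 1
          ≤ 2 ^ ((n : ℝ) * Rr j)) ∧
    (∀ j : Fin K, limsup (fun n => alphaK K Y P n (φ n) (g n) j) atTop ≤ εr j) ∧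
    (∀ j : Fin K,
      θ j ≤ liminf (fun n => Real.logb 2 (1 / betaK K Y P n (φ n) (g n) j) / n) atTop)

/-- The fundamental exponents region `E*(R₁,…,R_K,ε₁,…,ε_K)`: the closure of the set of
all `(ε₁,…,ε_K)`-achievable exponent tuples. -/
def Eregion (Rr εr : Fin K → ℝ) : Set (Fin K → ℝ) :=
  closure {θ | achievableK K Y P Rr εr θ}

end KHop


section Basics

variable {Ω α β γ : Type*} [Fintype Ω]

theorem pe_nonneg {p : Ω → ℝ} (hp : ∀ ω, 0 ≤ p ω) (X : Ω → α) (a : α) : 0 ≤ probEq p X a := by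
  unfold probEq
  exact Finset.sum_nonneg fun ω _ => by split_ifs <;> simp [hp]

theorem pe_self_le {p : Ω → ℝ} (hp : ∀ ω, 0 ≤ p ω) (X : Ω → α) (ω : Ω) :
    p ω ≤ probEq p X (X ω) := by
  classical
  unfold probEq
  have := Finset.single_le_sum (f := fun ω' => if X ω' = X ω then p ω' else 0)
    (fun ω' _ => by split_ifs <;> simp [hp]) (Finset.mem_univ ω)
  simpa using this

theorem pe_pos {p : Ω → ℝ} (hp : ∀ ω, 0 ≤ p ω) (X : Ω → α) {ω : Ω} (h : 0 < p ω) :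
    0 < probEq p X (X ω) := h.trans_le (pe_self_le hp X ω)

theorem pe_expect [Fintype α] (p : Ω → ℝ) (X : Ω → α) (g : α → ℝ) :
    ∑ ω, p ω * g (X ω) = ∑ a, probEq p X a * g a := by
  classical
  unfold probEq
  simp_rw [Finset.sum_mul]
  rw [Finset.sum_comm]
  refine Finset.sum_congr rfl fun ω _ => ?_
  simp [ite_mul]

theorem pe_sum [Fintype α] (p : Ω → ℝ) (X : Ω → α) : ∑ a, probEq p X a = ∑ ω, p ω := by
  simpa using (pe_expect p X (fun _ => 1)).symm

theorem pe_le_one {p : Ω → ℝ} (hp : IsPMF p) (X : Ω → α) (a : α) : probEq p X a ≤ 1 := by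
  classical
  rw [← hp.2]
  unfold probEq
  exact Finset.sum_le_sum fun ω _ => by split_ifs <;> simp [hp.1]

theorem pe_mono {p q : Ω → ℝ} {c : ℝ} (h : ∀ ω, p ω ≤ c * q ω) (X : Ω → α) (a : α) :
    probEq p X a ≤ c * probEq q X a := by
  classical
  unfold probEq
  rw [Finset.mul_sum]
  exact Finset.sum_le_sum fun ω _ => by split_ifs <;> simp [h]

theorem pe_congr (p : Ω → ℝ) {X : Ω → α} {Z : Ω → β} {a : α} {b : β}
    (h : ∀ ω, X ω = a ↔ Z ω = b) : probEq p X a = probEq p Z b := by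
  classical
  unfold probEq
  exact Finset.sum_congr rfl fun ω _ => by simp [h ω]

theorem pe_comp [Fintype α] (p : Ω → ℝ) (X : Ω → α) (f : α → β) (b : β) :
    probEq (probEq p X) f b = probEq p (fun ω => f (X ω)) b := by
  classical
  have := pe_expect p X (fun a => if f a = b then 1 else 0)
  simp only [mul_ite, mul_one, mul_zero] at this
  unfold probEq at *
  convert this.symm

theorem pe_le_of_imp {p : Ω → ℝ} (hp : ∀ ω, 0 ≤ p ω) {X : Ω → α} {Z : Ω → β} {a : α} {b : β}
    (h : ∀ ω, X ω = a → Z ω = b) : probEq p X a ≤ probEq p Z b := by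
  classical
  unfold probEq
  refine Finset.sum_le_sum fun ω _ => ?_
  by_cases h1 : X ω = a
  · simp [h1, h ω h1]
  · simp only [h1, if_false]; split_ifs <;> simp [hp]

theorem pe_pair_sum [Fintype β] (p : Ω → ℝ) (X : Ω → α) (Z : Ω → β) (a : α) :
    ∑ b, probEq p (fun ω => (X ω, Z ω)) (a, b) = probEq p X a := by
  classical
  unfold probEq
  rw [Finset.sum_comm]
  refine Finset.sum_congr rfl fun ω _ => ?_
  by_cases h : X ω = a <;> simp [h]

theorem sum_log_nonpos {p g : Ω → ℝ} (hp : ∀ ω, 0 ≤ p ω) (hs : ∑ ω, p ω = 1)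
    (hg : ∀ ω, 0 < p ω → 0 < g ω) (h : ∑ ω, p ω * g ω ≤ 1) :
    ∑ ω, p ω * Real.log (g ω) ≤ 0 := by
  have : ∑ ω, p ω * Real.log (g ω) ≤ ∑ ω, (p ω * g ω - p ω) := by
    refine Finset.sum_le_sum fun ω _ => ?_
    rcases (hp ω).eq_or_lt with h0 | h0
    · simp [← h0]
    · have := Real.log_le_sub_one_of_pos (hg ω h0)
      nlinarith
  rw [Finset.sum_sub_distrib, hs] at this
  linarith

/-- sums of `p * log` may be compared on the support -/
theorem sum_log_congr {p f g : Ω → ℝ} (hp : ∀ ω, 0 ≤ p ω)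
    (h : ∀ ω, 0 < p ω → f ω = g ω) : ∑ ω, p ω * f ω = ∑ ω, p ω * g ω := by
  refine Finset.sum_congr rfl fun ω _ => ?_
  rcases (hp ω).eq_or_lt with h0 | h0
  · simp [← h0]
  · rw [h ω h0]

theorem sum_log_mono {p f g : Ω → ℝ} (hp : ∀ ω, 0 ≤ p ω)
    (h : ∀ ω, 0 < p ω → f ω ≤ g ω) : ∑ ω, p ω * f ω ≤ ∑ ω, p ω * g ω := by
  refine Finset.sum_le_sum fun ω _ => ?_
  rcases (hp ω).eq_or_lt with h0 | h0
  · simp [← h0]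
  · exact mul_le_mul_of_nonneg_left (h ω h0) h0.le

theorem gibbs [Fintype α] {p : Ω → ℝ} (hp : IsPMF p) (Z : Ω → α) (r : α → ℝ)
    (hr0 : ∀ z, 0 ≤ r z) (hr : ∑ z, r z ≤ 1) (hpos : ∀ ω, 0 < p ω → 0 < r (Z ω)) :
    ∑ ω, p ω * Real.log (r (Z ω)) ≤ ∑ ω, p ω * Real.log (probEq p Z (Z ω)) := by
  have key : ∑ ω, p ω * Real.log (r (Z ω) / probEq p Z (Z ω)) ≤ 0 := by
    refine sum_log_nonpos hp.1 hp.2 (fun ω h => div_pos (hpos ω h) (pe_pos hp.1 Z h)) ?_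
    rw [pe_expect p Z (fun z => r z / probEq p Z z)]
    refine le_trans (Finset.sum_le_sum fun z _ => ?_) hr
    rcases (pe_nonneg hp.1 Z z).eq_or_lt with h0 | h0
    · rw [← h0]; simp [hr0]
    · rw [mul_div_cancel₀ _ h0.ne']
  have e : ∑ ω, p ω * Real.log (r (Z ω) / probEq p Z (Z ω)) =
      ∑ ω, p ω * Real.log (r (Z ω)) - ∑ ω, p ω * Real.log (probEq p Z (Z ω)) := by
    rw [← Finset.sum_sub_distrib]
    simp_rw [← mul_sub]
    exact sum_log_congr hp.1 fun ω h => Real.log_div (hpos ω h).ne' (pe_pos hp.1 Z h).ne'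
  linarith

theorem cond_gibbs [Fintype α] [Fintype β] {p : Ω → ℝ} (hp : IsPMF p) (U : Ω → α) (Z : Ω → β)
    (r : α → β → ℝ)
    (hr0 : ∀ u z, 0 ≤ r u z) (hr : ∀ u, ∑ z, r u z ≤ 1) (hpos : ∀ ω, 0 < p ω → 0 < r (U ω) (Z ω)) :
    ∑ ω, p ω * Real.log (r (U ω) (Z ω)) ≤
      ∑ ω, p ω * Real.log (probEq p (fun ω => (U ω, Z ω)) (U ω, Z ω) / probEq p U (U ω)) := by
  have h := gibbs hp (fun ω => (U ω, Z ω)) (fun uz => r uz.1 uz.2 * probEq p U uz.1)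
    (fun z => mul_nonneg (hr0 _ _) (pe_nonneg hp.1 _ _)) ?_
    (fun ω h => mul_pos (hpos ω h) (pe_pos hp.1 U h))
  · have e1 : ∑ ω, p ω * Real.log (r (U ω) (Z ω) * probEq p U (U ω)) =
      ∑ ω, p ω * Real.log (r (U ω) (Z ω)) + ∑ ω, p ω * Real.log (probEq p U (U ω)) := by
      rw [← Finset.sum_add_distrib]
      simp_rw [← mul_add]
      exact sum_log_congr hp.1 fun ω h => Real.log_mul (hpos ω h).ne' (pe_pos hp.1 U h).ne'
    have e2 : ∑ ω, p ω * Real.log (probEq p (fun ω => (U ω, Z ω)) (U ω, Z ω) / probEq p U (U ω)) =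
      ∑ ω, p ω * Real.log (probEq p (fun ω => (U ω, Z ω)) (U ω, Z ω)) -
        ∑ ω, p ω * Real.log (probEq p U (U ω)) := by
      rw [← Finset.sum_sub_distrib]
      simp_rw [← mul_sub]
      exact sum_log_congr hp.1 fun ω h =>
        Real.log_div (pe_pos hp.1 (fun ω => (U ω, Z ω)) h).ne' (pe_pos hp.1 U h).ne'
    simp only at h
    linarith
  · rw [Fintype.sum_prod_type]
    simp only
    simp_rw [← Finset.sum_mul]
    calc _ ≤ ∑ u, 1 * probEq p U u :=
          Finset.sum_le_sum fun u _ => mul_le_mul_of_nonneg_right (hr u) (pe_nonneg hp.1 _ _)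
      _ = 1 := by simp [pe_sum, hp.2]

/-- conditioning on more reduces entropy -/
theorem cond_refine [Fintype α] [Fintype β] {p : Ω → ℝ} (hp : IsPMF p) (U : Ω → α) (Z : Ω → β)
    (f : α → γ) :
    ∑ ω, p ω * Real.log (probEq p (fun ω => (f (U ω), Z ω)) (f (U ω), Z ω) /
        probEq p (fun ω => f (U ω)) (f (U ω))) ≤
      ∑ ω, p ω * Real.log (probEq p (fun ω => (U ω, Z ω)) (U ω, Z ω) / probEq p U (U ω)) := by
  refine cond_gibbs hp U Z (fun u z => probEq p (fun ω => (f (U ω), Z ω)) (f u, z) /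
        probEq p (fun ω => f (U ω)) (f u)) (fun u z => div_nonneg (pe_nonneg hp.1 _ _)
        (pe_nonneg hp.1 _ _)) (fun u => ?_) (fun ω h => div_pos ?_ ?_)
  · rw [← Finset.sum_div, pe_pair_sum p (fun ω => f (U ω)) Z]
    exact div_self_le_one _
  · exact pe_pos hp.1 (fun ω => (f (U ω), Z ω)) h
  · exact pe_pos hp.1 (fun ω => (f (U ω))) h

theorem kl_nonneg [Fintype α] {p q : Ω → ℝ} (hp : IsPMF p) (hq : IsPMF q)
    (hpq : ∀ ω, 0 < p ω → 0 < q ω) (Z : Ω → α) :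
    0 ≤ ∑ ω, p ω * Real.log (probEq p Z (Z ω) / probEq q Z (Z ω)) := by
  have := gibbs hp Z (fun z => probEq q Z z) (fun z => pe_nonneg hq.1 _ _)
    (by rw [pe_sum, hq.2]) (fun ω h => pe_pos hq.1 Z (hpq ω h))
  have e : ∑ ω, p ω * Real.log (probEq p Z (Z ω) / probEq q Z (Z ω)) =
      ∑ ω, p ω * Real.log (probEq p Z (Z ω)) - ∑ ω, p ω * Real.log (probEq q Z (Z ω)) := by
    rw [← Finset.sum_sub_distrib]
    simp_rw [← mul_sub]
    exact sum_log_congr hp.1 fun ω h =>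
      Real.log_div (pe_pos hp.1 Z h).ne' (pe_pos hq.1 Z (hpq ω h)).ne'
  linarith

theorem data_proc_aux [Fintype α] [Fintype β] {p q : Ω → ℝ} (hp : IsPMF p) (hq : IsPMF q)
    (hpq : ∀ ω, 0 < p ω → 0 < q ω) (Z : Ω → α) (f : α → β) :
    ∑ ω, p ω * Real.log (probEq p (fun ω => f (Z ω)) (f (Z ω)) /
        probEq q (fun ω => f (Z ω)) (f (Z ω))) ≤
    ∑ ω, p ω * Real.log (probEq p Z (Z ω) / probEq q Z (Z ω)) := by
  have hZ : ∀ ω, 0 < p ω → 0 < probEq q Z (Z ω) := fun ω h => pe_pos hq.1 Z (hpq ω h)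
  have hD : ∀ ω, 0 < p ω → 0 < probEq q (fun ω => f (Z ω)) (f (Z ω)) := fun ω h =>
    pe_pos hq.1 (fun ω => f (Z ω)) (hpq ω h)
  have hD' : ∀ ω, 0 < p ω → 0 < probEq p (fun ω => f (Z ω)) (f (Z ω)) := fun ω h =>
    pe_pos hp.1 (fun ω => f (Z ω)) h
  have := gibbs hp Z (fun z => probEq q Z z * (probEq p (fun ω => f (Z ω)) (f z) /
        probEq q (fun ω => f (Z ω)) (f z))) (fun z => mul_nonneg (pe_nonneg hq.1 _ _)
        (div_nonneg (pe_nonneg hp.1 _ _) (pe_nonneg hq.1 _ _))) ?_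
        (fun ω h => mul_pos (hZ ω h) (div_pos (hD' ω h) (hD ω h)))
  · have e : ∑ ω, p ω * Real.log (probEq p Z (Z ω) / probEq q Z (Z ω)) =
      ∑ ω, p ω * Real.log (probEq p Z (Z ω)) - ∑ ω, p ω * Real.log (probEq q Z (Z ω)) := by
      rw [← Finset.sum_sub_distrib]
      simp_rw [← mul_sub]
      exact sum_log_congr hp.1 fun ω h =>
        Real.log_div (pe_pos hp.1 Z h).ne' (hZ ω h).ne'
    have e2 : ∑ ω, p ω * Real.log (probEq q Z (Z ω) * (probEq p (fun ω => f (Z ω)) (f (Z ω)) /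
        probEq q (fun ω => f (Z ω)) (f (Z ω)))) =
      ∑ ω, p ω * Real.log (probEq q Z (Z ω)) +
      ∑ ω, p ω * Real.log (probEq p (fun ω => f (Z ω)) (f (Z ω)) /
        probEq q (fun ω => f (Z ω)) (f (Z ω))) := by
      rw [← Finset.sum_add_distrib]
      simp_rw [← mul_add]
      exact sum_log_congr hp.1 fun ω h =>
        Real.log_mul (hZ ω h).ne' (div_pos (hD' ω h) (hD ω h)).ne'
    linarith
  · rw [pe_expect (probEq q Z) f (fun b => probEq p (fun ω => f (Z ω)) b /
        probEq q (fun ω => f (Z ω)) b)]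
    rw [← hp.2, ← pe_sum p (fun ω => f (Z ω))]
    refine Finset.sum_le_sum fun b _ => ?_
    rw [pe_comp]
    rcases (pe_nonneg hq.1 (fun ω => f (Z ω)) b).eq_or_lt with h0 | h0
    · rw [← h0]; simp [pe_nonneg hp.1]
    · rw [mul_div_cancel₀ _ h0.ne']

theorem data_proc {p q : Ω → ℝ} (hp : IsPMF p) (hq : IsPMF q)
    (hpq : ∀ ω, 0 < p ω → 0 < q ω) (Z : Ω → α) (D : Ω → β)
    (hf : ∀ ω ω', Z ω = Z ω' → D ω = D ω') :
    ∑ ω, p ω * Real.log (probEq p D (D ω) / probEq q D (D ω)) ≤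
    ∑ ω, p ω * Real.log (probEq p Z (Z ω) / probEq q Z (Z ω)) := by
  classical
  have : Fintype (Set.range Z) := Fintype.ofFinite _
  have : Fintype (Set.range D) := Fintype.ofFinite _
  obtain ⟨g, hg⟩ : ∃ g : Set.range Z → Ω, ∀ z, Z (g z) = z.1 :=
    ⟨fun z => Classical.choose z.2, fun z => Classical.choose_spec z.2⟩
  have h := data_proc_aux hp hq hpq (Set.rangeFactorization Z)
    (fun z : Set.range Z => Set.rangeFactorization D (g z))
  have hD : ∀ ω, D (g (Set.rangeFactorization Z ω)) = D ω := fun ω => hf _ _ (hg _)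
  have h1 : ∀ (r : Ω → ℝ) ω, probEq r (Set.rangeFactorization Z) (Set.rangeFactorization Z ω) =
      probEq r Z (Z ω) := fun r ω => pe_congr r fun ω' => by
        simp [Set.rangeFactorization, Subtype.ext_iff]
  have h2 : ∀ (r : Ω → ℝ) ω, probEq r (fun ω =>
        Set.rangeFactorization D (g (Set.rangeFactorization Z ω)))
        (Set.rangeFactorization D (g (Set.rangeFactorization Z ω))) =
      probEq r D (D ω) := fun r ω => pe_congr r fun ω' => by
        rw [Subtype.ext_iff]
        simp only [Set.rangeFactorization_coe]
        rw [hD, hD]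
  simp only [h1, h2] at h
  exact h

/-- Resampling one coordinate of a product law. -/
theorem resample {ι : Type*} [Fintype ι] [DecidableEq ι] {A : ι → Type*} [∀ i, Fintype (A i)]
    (w : ∀ i, A i → ℝ) (j : ι) (hw : ∑ s, w j s = 1) (F : (∀ i, A i) → ℝ) :
    ∑ ω : ∀ i, A i, (∏ i, w i (ω i)) * F ω =
      ∑ ω : ∀ i, A i, (∏ i, w i (ω i)) * ∑ s, w j s * F (Function.update ω j s) := by
  have e1 : ∑ ω : ∀ i, A i, (∏ i, w i (ω i)) * F ω =
      ∑ z : (∀ i, A i) × A j, (∏ i, w i (z.1 i)) * w j z.2 * F z.1 := by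
    rw [Fintype.sum_prod_type]
    refine Finset.sum_congr rfl fun ω _ => ?_
    simp only
    simp_rw [mul_right_comm _ _ (F ω)]
    rw [← Finset.mul_sum, hw, mul_one]
  have e2 : ∑ ω : ∀ i, A i, (∏ i, w i (ω i)) * ∑ s, w j s * F (Function.update ω j s) =
      ∑ z : (∀ i, A i) × A j, (∏ i, w i (z.1 i)) * w j z.2 * F (Function.update z.1 j z.2) := by
    rw [Fintype.sum_prod_type]
    refine Finset.sum_congr rfl fun ω _ => ?_
    rw [Finset.mul_sum]
    exact Finset.sum_congr rfl fun s _ => by ring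
  rw [e1, e2]
  have hinv : Function.Involutive
      (fun z : (∀ i, A i) × A j => (Function.update z.1 j z.2, z.1 j)) := by
    intro z
    simp
  refine Fintype.sum_equiv hinv.toPerm _ _ fun z => ?_
  simp only [Function.Involutive.coe_toPerm, Function.update_idem, Function.update_eq_self]
  congr 1
  rw [← Finset.mul_prod_erase _ _ (Finset.mem_univ j),
    ← Finset.mul_prod_erase (a := j) Finset.univ (fun i => w i (Function.update z.1 j z.2 i))
      (Finset.mem_univ j)]
  rw [Finset.prod_congr rfl (g := fun i => w i (z.1 i)) (s₁ := Finset.univ.erase j)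
    (f := fun i => w i (Function.update z.1 j z.2 i)) (fun i hi => by
      rw [Function.update_of_ne (Finset.ne_of_mem_erase hi)])]
  simp only [Function.update_self]
  ring

/-- pushforward of an iid law -/
theorem pe_iid {S : Type*} [Fintype S] {n : ℕ} (P : S → ℝ) (f : S → β) (v : Fin n → β) :
    probEq (fun ω : Fin n → S => ∏ t, P (ω t)) (fun ω t => f (ω t)) v =
      ∏ t, probEq P f (v t) := by
  classical
  unfold probEq
  rw [Finset.prod_univ_sum]
  rw [Fintype.piFinset_univ]
  refine Finset.sum_congr rfl fun ω _ => ?_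
  by_cases h : (fun t => f (ω t)) = v
  · rw [if_pos h]
    refine Finset.prod_congr rfl fun t _ => ?_
    rw [if_pos (congrFun h t)]
  · rw [if_neg h]
    obtain ⟨t, ht⟩ := Function.ne_iff.mp h
    exact (Finset.prod_eq_zero (Finset.mem_univ t) (by simp [ht])).symm

theorem iid_pmf {S : Type*} [Fintype S] {n : ℕ} {P : S → ℝ} (hP : IsPMF P) :
    IsPMF (fun ω : Fin n → S => ∏ t, P (ω t)) := by
  classical
  refine ⟨fun ω => Finset.prod_nonneg fun t _ => hP.1 _, ?_⟩
  rw [← Fintype.piFinset_univ, ← Finset.prod_univ_sum]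
  simp [hP.2]

end Basics


section SingleLetter

def ES {X Y : Type} [Fintype X] [Fintype Y] (PXY : X → Y → ℝ) (R : ℝ) : Set ℝ :=
  {r | ∃ (m : ℕ) (PU : X → Fin m → ℝ),
      (∀ a, IsPMF (PU a)) ∧
      miOf (fun q : Fin m × X × Y => PU q.2.1 q.1 * PXY q.2.1 q.2.2)
        (fun q => q.1) (fun q => q.2.1) ≤ R ∧
      r = miOf (fun q : Fin m × X × Y => PU q.2.1 q.1 * PXY q.2.1 q.2.2)
        (fun q => q.1) (fun q => q.2.2)}

def Iof {V A : Type*} [Fintype V] [Fintype A] (τ : V → A → ℝ) (PA : A → ℝ) : ℝ :=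
  ∑ v, ∑ a, τ v a * Real.log (τ v a / ((∑ a', τ v a') * PA a))

theorem mi_eq {Ω α β : Type*} [Fintype Ω] [Fintype α] [Fintype β] {J : Ω → ℝ}
    (hJ : ∀ ω, 0 ≤ J ω) (U : Ω → α) (X : Ω → β) (T : α → β → ℝ)
    (hT : ∀ u x, probEq J (fun ω => (U ω, X ω)) (u, x) = T u x) :
    miOf J U X * Real.log 2 = Iof T (fun x => ∑ u, T u x) := by
  have hU : ∀ u, probEq J U u = ∑ x, T u x := fun u => by
    simp_rw [← hT]; rw [pe_pair_sum]
  have hX : ∀ x, probEq J X x = ∑ u, T u x := fun x => by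
    simp_rw [← hT]
    rw [← pe_pair_sum J X U]
    exact Finset.sum_congr rfl fun u _ => pe_congr J fun ω => by simp [and_comm]
  have e : Iof T (fun x => ∑ u, T u x) = ∑ ω, J ω * Real.log (probEq J (fun ω => (U ω, X ω))
      (U ω, X ω) / (probEq J U (U ω) * probEq J X (X ω))) := by
    rw [pe_expect J (fun ω => (U ω, X ω)) (fun z => Real.log (probEq J (fun ω => (U ω, X ω))
      (z.1, z.2) / (probEq J U z.1 * probEq J X z.2)))]
    rw [Fintype.sum_prod_type]
    unfold Iof
    simp_rw [hT, hU, hX]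
  rw [e]
  unfold miOf entOf
  have l2 : Real.log 2 ≠ 0 := (Real.log_pos one_lt_two).ne'
  simp only [Real.logb]
  have hx : ∀ f : Ω → ℝ, (∑ ω, J ω * (f ω / Real.log 2)) * Real.log 2 = ∑ ω, J ω * f ω := by
    intro f
    rw [Finset.sum_mul]
    exact Finset.sum_congr rfl fun ω _ => by field_simp
  rw [sub_mul, add_mul, neg_mul, neg_mul, neg_mul, hx, hx, hx]
  rw [sub_neg_eq_add, ← sub_eq_add_neg, ← Finset.sum_neg_distrib, ← Finset.sum_sub_distrib,
    ← Finset.sum_add_distrib]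
  simp_rw [← mul_neg, ← mul_sub, ← mul_add]
  refine sum_log_congr hJ fun ω h => ?_
  rw [Real.log_div (pe_pos hJ (fun ω => (U ω, X ω)) h).ne'
    (mul_pos (pe_pos hJ U h) (pe_pos hJ X h)).ne', Real.log_mul (pe_pos hJ U h).ne'
    (pe_pos hJ X h).ne']
  ring

/-- Single-letter source data: `PXY x y = PX x * W x y`. -/
structure Src {X Y : Type} [Fintype X] [Fintype Y] (PXY : X → Y → ℝ) (PX : X → ℝ)
    (PY : Y → ℝ) (W : X → Y → ℝ) : Prop where
  px0 : ∀ x, 0 ≤ PX x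
  px1 : ∑ x, PX x = 1
  w0 : ∀ x y, 0 ≤ W x y
  w1 : ∀ x, ∑ y, W x y = 1
  fac : ∀ x y, PXY x y = PX x * W x y
  py : ∀ y, PY y = ∑ x, PXY x y

variable {X Y : Type} [Fintype X] [Fintype Y] {PXY : X → Y → ℝ} {PX : X → ℝ}
    {PY : Y → ℝ} {W : X → Y → ℝ}

theorem Src.py0 (h : Src PXY PX PY W) (y : Y) : 0 ≤ PY y := by
  rw [h.py]; exact Finset.sum_nonneg fun x _ => by
    rw [h.fac]; exact mul_nonneg (h.px0 x) (h.w0 x y)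

theorem Src.py1 (h : Src PXY PX PY W) : ∑ y, PY y = 1 := by
  simp_rw [h.py]
  rw [Finset.sum_comm]
  simp_rw [h.fac, ← Finset.mul_sum, h.w1, mul_one]
  exact h.px1

theorem Src.bdd (h : Src PXY PX PY W) (R : ℝ) : BddAbove (ES PXY R) := by
  refine ⟨(∑ y, PY y * -Real.logb 2 (PY y)), ?_⟩
  rintro r ⟨m, PU, hPU, -, rfl⟩
  set J : Fin m × X × Y → ℝ := fun q => PU q.2.1 q.1 * PXY q.2.1 q.2.2 with hJdef
  have hJ : ∀ ω, 0 ≤ J ω := fun ω => mul_nonneg ((hPU _).1 _) (by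
    rw [h.fac]; exact mul_nonneg (h.px0 _) (h.w0 _ _))
  have hY : ∀ y, probEq J (fun q => q.2.2) y = PY y := by
    intro y
    classical
    unfold probEq
    rw [Fintype.sum_prod_type, Finset.sum_comm, Fintype.sum_prod_type]
    simp only [hJdef]
    rw [h.py]
    refine Finset.sum_congr rfl fun x _ => ?_
    rw [Finset.sum_eq_single y]
    · simp only [if_true]
      rw [← Finset.sum_mul, (hPU x).2, one_mul]
    · intro b _ hb; simp [hb]
    · simp
  have e1 : entOf J (fun q => q.2.2) = ∑ y, PY y * -Real.logb 2 (PY y) := by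
    unfold entOf
    rw [pe_expect J (fun q => q.2.2)
      (fun y => Real.logb 2 (probEq J (fun q => q.2.2) y)), ← Finset.sum_neg_distrib]
    simp [hY]
  have e2 : entOf J (fun q => q.1) ≤ entOf J (fun q => (q.1, q.2.2)) := by
    unfold entOf
    refine neg_le_neg (sum_log_mono hJ fun ω hω => ?_)
    refine Real.logb_le_logb_of_le one_lt_two (pe_pos hJ (fun q : Fin m × X × Y => (q.1, q.2.2)) hω)
      (pe_le_of_imp hJ fun ω' h' => (Prod.ext_iff.mp h').1)
  unfold miOf
  linarith

theorem Iof_equiv {V V' A : Type*} [Fintype V] [Fintype V'] [Fintype A] (e : V' ≃ V)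
    (τ : V → A → ℝ) (PA : A → ℝ) : Iof (fun v => τ (e v)) PA = Iof τ PA := by
  unfold Iof
  exact Equiv.sum_comp e (fun v => ∑ a, τ v a * Real.log (τ v a / ((∑ a', τ v a') * PA a)))

theorem Src.eta_mem (h : Src PXY PX PY W) {V : Type*} [Fintype V] (τ : V → X → ℝ)
    (h0 : ∀ v x, 0 ≤ τ v x) (hm : ∀ x, ∑ v, τ v x = PX x) (R : ℝ)
    (hI : Iof τ PX ≤ R * Real.log 2) :
    Iof (fun v y => ∑ x, τ v x * W x y) PY ≤ Real.log 2 * sSup (ES PXY R) := by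
  classical
  have hl2 := Real.log_pos one_lt_two
  obtain ⟨v0⟩ : Nonempty V := by
    by_contra hV
    rw [not_nonempty_iff] at hV
    have := h.px1
    simp_rw [← hm] at this
    simp at this
  have hz : ∀ v x, PX x = 0 → τ v x = 0 := fun v x hx => by
    rw [← hm] at hx
    exact (Finset.sum_eq_zero_iff_of_nonneg (fun v _ => h0 v x)).mp hx v (Finset.mem_univ v)
  let e := Fintype.equivFin V
  let PU : X → Fin (Fintype.card V) → ℝ := fun x u =>
    if PX x = 0 then (if u = e v0 then 1 else 0) else τ (e.symm u) x / PX x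
  have hPU : ∀ x, IsPMF (PU x) := by
    intro x
    by_cases hx : PX x = 0
    · refine ⟨fun u => ?_, ?_⟩
      · simp only [PU, hx, if_true]; split_ifs <;> simp
      · simp [PU, hx]
    · refine ⟨fun u => ?_, ?_⟩
      · simp only [PU, hx, if_false]; exact div_nonneg (h0 _ _) (h.px0 _)
      · simp only [PU, hx, if_false]
        rw [← Finset.sum_div, Equiv.sum_comp e.symm (fun v => τ v x), hm, div_self hx]
  have hJe : ∀ q : Fin (Fintype.card V) × X × Y, PU q.2.1 q.1 * PXY q.2.1 q.2.2 =
      τ (e.symm q.1) q.2.1 * W q.2.1 q.2.2 := by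
    intro q
    rw [h.fac]
    by_cases hx : PX q.2.1 = 0
    · simp [hx, hz]
    · simp only [PU, hx, if_false]; field_simp
  have hJ : ∀ q : Fin (Fintype.card V) × X × Y, 0 ≤ PU q.2.1 q.1 * PXY q.2.1 q.2.2 := fun q => by
    rw [hJe]; exact mul_nonneg (h0 _ _) (h.w0 _ _)
  have m1 := mi_eq hJ (fun q => q.1) (fun q => q.2.1) (fun u x => τ (e.symm u) x) (by
    intro u x
    unfold probEq
    simp_rw [hJe, Fintype.sum_prod_type, Prod.mk.injEq, ite_and]
    simp [← Finset.mul_sum, h.w1])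
  have m2 := mi_eq hJ (fun q => q.1) (fun q => q.2.2)
    (fun u y => ∑ x, τ (e.symm u) x * W x y) (by
    intro u y
    unfold probEq
    simp_rw [hJe, Fintype.sum_prod_type, Prod.mk.injEq, ite_and]
    simp)
  have q1 : ∀ x, ∑ u, τ (e.symm u) x = PX x := fun x => by
    rw [Equiv.sum_comp e.symm (fun v => τ v x), hm]
  have q2 : ∀ y, ∑ u, ∑ x, τ (e.symm u) x * W x y = PY y := fun y => by
    rw [Finset.sum_comm, h.py]
    simp_rw [← Finset.sum_mul, q1, h.fac]
  simp only [q1] at m1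
  simp only [q2] at m2
  rw [Iof_equiv e.symm τ PX] at m1
  rw [Iof_equiv e.symm (fun v y => ∑ x, τ v x * W x y) PY] at m2
  rw [← m2, mul_comm]
  refine mul_le_mul_of_nonneg_left (le_csSup (h.bdd R) ⟨_, PU, hPU, ?_, rfl⟩) hl2.le
  rw [← m1] at hI
  exact le_of_mul_le_mul_right hI hl2

theorem Iof_option {V A : Type*} [Fintype V] [Fintype A] (τ : Option V → A → ℝ) (σ : V → A → ℝ)
    (ρ : A → ℝ) (PA : A → ℝ) (μ : ℝ) (hμ : 0 < μ) (h1 : ∀ v a, τ (some v) a = μ * σ v a)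
    (h2 : ∀ a, τ none a = ρ a) :
    Iof τ PA = μ * Iof σ PA + ∑ a, ρ a * Real.log (ρ a / ((∑ a', ρ a') * PA a)) := by
  unfold Iof
  rw [Fintype.sum_option, add_comm]
  simp_rw [h1, h2, Finset.mul_sum]
  congr 1
  refine Finset.sum_congr rfl fun v _ => Finset.sum_congr rfl fun a _ => ?_
  rw [← Finset.mul_sum, mul_assoc μ (∑ _, _), mul_div_mul_left _ _ hμ.ne', mul_assoc]

theorem kl_row_nonneg {A : Type*} [Fintype A] (f g : A → ℝ) (hf : ∀ a, 0 ≤ f a)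
    (hg0 : ∀ a, 0 ≤ g a) (hg : ∑ a, g a ≤ 1) (hfg : ∀ a, 0 < f a → 0 < g a) :
    0 ≤ ∑ a, f a * Real.log (f a / ((∑ a', f a') * g a)) := by
  have hF : 0 ≤ ∑ a, f a := Finset.sum_nonneg fun a _ => hf a
  have : ∑ a, (f a - (∑ a', f a') * g a) ≤
      ∑ a, f a * Real.log (f a / ((∑ a', f a') * g a)) := by
    refine Finset.sum_le_sum fun a _ => ?_
    rcases (hf a).eq_or_lt with h0 | h0
    · rw [← h0]; simp only [zero_sub, zero_div, zero_mul]
      exact neg_nonpos.mpr (mul_nonneg hF (hg0 a))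
    · have hFp : 0 < ∑ a', f a' := h0.trans_le (Finset.single_le_sum (fun a _ => hf a)
        (Finset.mem_univ a))
      have hh := mul_pos hFp (hfg a h0)
      have := Real.one_sub_inv_le_log_of_pos (div_pos h0 hh)
      rw [inv_div] at this
      calc f a - (∑ a', f a') * g a = f a * (1 - (∑ a', f a') * g a / f a) := by field_simp
        _ ≤ _ := mul_le_mul_of_nonneg_left this h0.le
  rw [Finset.sum_sub_distrib, ← Finset.mul_sum] at this
  nlinarith

theorem Src.row_sum (h : Src PXY PX PY W) (f : X → ℝ) : ∑ y, ∑ x, f x * W x y = ∑ x, f x := by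
  rw [Finset.sum_comm]
  simp_rw [← Finset.mul_sum, h.w1, mul_one]

theorem Src.dpi (h : Src PXY PX PY W) {V : Type*} [Fintype V] (τ : V → X → ℝ)
    (h0 : ∀ v x, 0 ≤ τ v x) (hm : ∀ x, ∑ v, τ v x = PX x) :
    Iof (fun v y => ∑ x, τ v x * W x y) PY ≤ Iof τ PX := by
  classical
  set TY : V → Y → ℝ := fun v y => ∑ x, τ v x * W x y with hTY
  set TV : V → ℝ := fun v => ∑ x, τ v x with hTV
  set J : V × X × Y → ℝ := fun z => τ z.1 z.2.1 * W z.2.1 z.2.2 with hJd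
  have hJ0 : ∀ z, 0 ≤ J z := fun z => mul_nonneg (h0 _ _) (h.w0 _ _)
  have hTY0 : ∀ v y, 0 ≤ TY v y := fun v y =>
    Finset.sum_nonneg fun x _ => mul_nonneg (h0 _ _) (h.w0 _ _)
  have hJ1 : ∑ z, J z = 1 := by
    simp only [hJd, Fintype.sum_prod_type]
    simp_rw [← Finset.mul_sum, h.w1, mul_one]
    rw [Finset.sum_comm]
    simp_rw [hm, h.px1]
  have pJ : ∀ z, 0 < J z → 0 < τ z.1 z.2.1 ∧ 0 < W z.2.1 z.2.2 ∧ 0 < TY z.1 z.2.2 ∧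
      0 < TV z.1 ∧ 0 < PX z.2.1 ∧ 0 < PY z.2.2 := by
    intro z hz
    have a1 : 0 < τ z.1 z.2.1 := pos_of_mul_pos_left hz (h.w0 _ _)
    have a2 : 0 < W z.2.1 z.2.2 := pos_of_mul_pos_right hz (h0 _ _)
    have a3 : 0 < PX z.2.1 := by
      rw [← hm]
      exact a1.trans_le (Finset.single_le_sum (f := fun v => τ v z.2.1) (fun v _ => h0 v _)
        (Finset.mem_univ z.1))
    refine ⟨a1, a2, ?_, ?_, a3, ?_⟩
    · exact hz.trans_le (Finset.single_le_sum (f := fun x => τ z.1 x * W x z.2.2)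
        (fun x _ => mul_nonneg (h0 _ _) (h.w0 _ _)) (Finset.mem_univ z.2.1))
    · exact a1.trans_le (Finset.single_le_sum (f := fun x => τ z.1 x)
        (fun x _ => h0 _ _) (Finset.mem_univ z.2.1))
    · rw [h.py]
      simp_rw [h.fac]
      exact (mul_pos a3 a2).trans_le (Finset.single_le_sum (f := fun x => PX x * W x z.2.2)
        (fun x _ => mul_nonneg (h.px0 _) (h.w0 _ _)) (Finset.mem_univ z.2.1))
  have e1 : Iof TY PY = ∑ z, J z * Real.log (TY z.1 z.2.2 / (TV z.1 * PY z.2.2)) := by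
    unfold Iof
    simp only [Fintype.sum_prod_type, hJd]
    refine Finset.sum_congr rfl fun v _ => ?_
    have e0 : ∑ y, TY v y = TV v := h.row_sum (τ v)
    conv_rhs => rw [Finset.sum_comm]
    refine Finset.sum_congr rfl fun y _ => ?_
    rw [e0, ← Finset.sum_mul]
  have e2 : Iof τ PX = ∑ z, J z * Real.log (τ z.1 z.2.1 / (TV z.1 * PX z.2.1)) := by
    unfold Iof
    simp only [Fintype.sum_prod_type, hJd]
    refine Finset.sum_congr rfl fun v _ => Finset.sum_congr rfl fun x _ => ?_
    rw [← Finset.sum_mul, ← Finset.mul_sum, h.w1, mul_one]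
  have key := sum_log_nonpos (g := fun z => TY z.1 z.2.2 * PX z.2.1 / (PY z.2.2 * τ z.1 z.2.1))
    hJ0 hJ1 (fun z hz => by
      obtain ⟨a, b, c, d, e, f⟩ := pJ z hz
      positivity) (by
      have b1 : ∀ z, J z * (TY z.1 z.2.2 * PX z.2.1 / (PY z.2.2 * τ z.1 z.2.1)) ≤
          TY z.1 z.2.2 / PY z.2.2 * (PX z.2.1 * W z.2.1 z.2.2) := by
        intro z
        have nn : 0 ≤ TY z.1 z.2.2 / PY z.2.2 * (PX z.2.1 * W z.2.1 z.2.2) :=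
          mul_nonneg (div_nonneg (hTY0 _ _) (h.py0 _)) (mul_nonneg (h.px0 _) (h.w0 _ _))
        rcases (hJ0 z).eq_or_lt with hz | hz
        · rw [← hz, zero_mul]; exact nn
        · obtain ⟨a, b, c, d, e, f⟩ := pJ z hz
          apply le_of_eq
          simp only [hJd]
          field_simp
      refine (Finset.sum_le_sum fun z _ => b1 z).trans ?_
      have : ∑ z : V × X × Y, TY z.1 z.2.2 / PY z.2.2 * (PX z.2.1 * W z.2.1 z.2.2) ≤
          ∑ v, ∑ y, TY v y := by
        simp only [Fintype.sum_prod_type]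
        refine Finset.sum_le_sum fun v _ => ?_
        rw [Finset.sum_comm]
        refine Finset.sum_le_sum fun y _ => ?_
        rw [← Finset.mul_sum]
        simp_rw [← h.fac]
        rw [← h.py]
        rcases (h.py0 y).eq_or_lt with hy | hy
        · rw [← hy]; simp [hTY0]
        · rw [div_mul_cancel₀ _ hy.ne']
      refine this.trans (le_of_eq ?_)
      have e0 : ∀ v, ∑ y, TY v y = TV v := fun v => h.row_sum (τ v)
      rw [Finset.sum_congr rfl fun v _ => e0 v]
      simp only [hTV]
      rw [Finset.sum_comm, Finset.sum_congr rfl fun x _ => hm x, h.px1])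
  have e3 : ∑ z, J z * Real.log (TY z.1 z.2.2 * PX z.2.1 / (PY z.2.2 * τ z.1 z.2.1)) =
      Iof TY PY - Iof τ PX := by
    rw [e1, e2, ← Finset.sum_sub_distrib]
    simp_rw [← mul_sub]
    refine sum_log_congr hJ0 fun z hz => ?_
    obtain ⟨a, b, c, d, e, f⟩ := pJ z hz
    rw [← Real.log_div (by positivity) (by positivity)]
    congr 1
    field_simp
  linarith

theorem Src.eta_nonneg (h : Src PXY PX PY W) {R : ℝ} (hR : 0 ≤ R) : 0 ≤ sSup (ES PXY R) := by
  have hl2 := Real.log_pos one_lt_two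
  have z : ∀ {A : Type} [Fintype A] (Q : A → ℝ), ∑ a, Q a = 1 → Iof (fun _ : Unit => Q) Q = 0 := by
    intro A _ Q hQ
    unfold Iof
    simp only [hQ, one_mul]
    refine Finset.sum_eq_zero fun v _ => Finset.sum_eq_zero fun a _ => ?_
    by_cases ha : Q a = 0 <;> simp [ha]
  have := h.eta_mem (fun _ : Unit => PX) (fun _ => h.px0) (by simp) R (by
    rw [z PX h.px1]; positivity)
  have e : (fun (_ : Unit) y => ∑ x, PX x * W x y) = fun _ => PY := by
    funext _ y; rw [h.py]; simp_rw [h.fac]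
  rw [e, z PY h.py1] at this
  exact nonneg_of_mul_nonneg_right this hl2

theorem Src.eta_lip (h : Src PXY PX PY W) {V : Type*} [Fintype V] (τ : V → X → ℝ)
    (h0 : ∀ v x, 0 ≤ τ v x) (hm : ∀ x, ∑ v, τ v x = PX x) (R δ : ℝ) (hR : 0 ≤ R) (hδ : 0 < δ)
    (hI : Iof τ PX ≤ R * Real.log 2 + δ) :
    Iof (fun v y => ∑ x, τ v x * W x y) PY ≤ Real.log 2 * sSup (ES PXY R) + δ := by
  have hl2 := Real.log_pos one_lt_two
  have hdp := h.dpi τ h0 hm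
  have hen := h.eta_nonneg hR
  rcases hR.eq_or_lt with hR0 | hR0
  · have := mul_nonneg hl2.le hen
    rw [← hR0] at hI this ⊢
    linarith
  · set L := R * Real.log 2 with hL
    have hLp : 0 < L := mul_pos hR0 hl2
    set μ := L / (L + δ) with hμ
    have hμ0 : 0 < μ := by positivity
    have hμ1 : μ < 1 := by rw [hμ, div_lt_one (by positivity)]; linarith
    have z : ∀ {A : Type} [Fintype A] (Q : A → ℝ), ∑ a, Q a = 1 →
        ∑ a, (1 - μ) * Q a * Real.log ((1 - μ) * Q a / ((∑ a', (1 - μ) * Q a') * Q a)) = 0 := by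
      intro A _ Q hQ
      simp_rw [← Finset.mul_sum, hQ, mul_one]
      refine Finset.sum_eq_zero fun a _ => ?_
      by_cases ha : Q a = 0
      · simp [ha]
      · rw [div_self (mul_ne_zero (by linarith) ha)]; simp
    let τ' : Option V → X → ℝ := fun v x => v.elim ((1 - μ) * PX x) (fun v => μ * τ v x)
    have i1 := Iof_option τ' τ (fun x => (1 - μ) * PX x) PX μ hμ0 (fun _ _ => rfl) (fun _ => rfl)
    have i2 := Iof_option (fun v y => ∑ x, τ' v x * W x y) (fun v y => ∑ x, τ v x * W x y)
      (fun y => (1 - μ) * PY y) PY μ hμ0 (fun v y => by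
        simp only [τ', Option.elim, Finset.mul_sum, mul_assoc]) (fun y => by
        simp only [τ', Option.elim, h.py, h.fac, Finset.mul_sum, mul_assoc])
    rw [z PX h.px1, add_zero] at i1
    rw [z PY h.py1, add_zero] at i2
    have := h.eta_mem τ' (fun v x => by
      cases v with
      | none => exact mul_nonneg (by linarith) (h.px0 x)
      | some v => exact mul_nonneg hμ0.le (h0 v x)) (fun x => by
        rw [Fintype.sum_option]
        simp only [τ', Option.elim]
        rw [← Finset.mul_sum, hm]; ring) R (by
        rw [i1]
        calc μ * Iof τ PX ≤ μ * (L + δ) := mul_le_mul_of_nonneg_left hI hμ0.le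
          _ = L := by rw [hμ]; field_simp)
    rw [i2] at this
    set IY := Iof (fun v y => ∑ x, τ v x * W x y) PY
    have h3 : (1 - μ) * IY ≤ (1 - μ) * (L + δ) :=
      mul_le_mul_of_nonneg_left (hdp.trans hI) (by linarith)
    have h4 : (1 - μ) * (L + δ) = δ := by rw [hμ]; field_simp; ring
    linarith

end SingleLetter


section Perturb

theorem sum_log_le {Ω : Type*} [Fintype Ω] {p g : Ω → ℝ} (hp : ∀ ω, 0 ≤ p ω)
    (hs : ∑ ω, p ω = 1) (hg : ∀ ω, 0 < p ω → 0 < g ω) :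
    ∑ ω, p ω * Real.log (g ω) ≤ ∑ ω, p ω * g ω - 1 := by
  have : ∑ ω, p ω * Real.log (g ω) ≤ ∑ ω, (p ω * g ω - p ω) := by
    refine Finset.sum_le_sum fun ω _ => ?_
    rcases (hp ω).eq_or_lt with h0 | h0
    · simp [← h0]
    · have := Real.log_le_sub_one_of_pos (hg ω h0)
      nlinarith
  rwa [Finset.sum_sub_distrib, hs] at this

theorem exp_quad {z : ℝ} (hz : z ≤ 1) : Real.exp z ≤ 1 + z + z ^ 2 := by
  by_cases h : -1 ≤ z
  · have := Real.abs_exp_sub_one_sub_id_le (abs_le.mpr ⟨h, hz⟩)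
    have := (abs_le.mp this).2
    linarith
  · push Not at h
    have : Real.exp z ≤ 1 := Real.exp_le_one_iff.mpr (by linarith)
    nlinarith

theorem mul_log_sq {v : ℝ} (h0 : 0 < v) (h1 : v ≤ 1) : v * Real.log v ^ 2 ≤ 4 := by
  have hs : 0 < √v := Real.sqrt_pos.mpr h0
  have hs1 : √v ≤ 1 := Real.sqrt_le_one.mpr h1
  have := Real.abs_log_mul_self_lt (√v) hs hs1
  have h2 : (Real.log (√v) * √v) ^ 2 ≤ 1 := by
    rw [sq_le_one_iff_abs_le_one]; exact this.le
  have h3 : Real.log (√v) = Real.log v / 2 := Real.log_sqrt h0.le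
  have h4 : √v ^ 2 = v := Real.sq_sqrt h0.le
  rw [mul_pow, h4, h3] at h2
  nlinarith

theorem hellinger {A : Type*} [Fintype A] {s P : A → ℝ} (hs0 : ∀ a, 0 ≤ s a)
    (hs1 : ∑ a, s a = 1) (hP0 : ∀ a, 0 ≤ P a) (hP1 : ∑ a, P a = 1)
    (hsP : ∀ a, 0 < s a → 0 < P a) {d : ℝ} (hd : 0 ≤ d)
    (hD : ∑ a, s a * Real.log (s a / P a) ≤ d ^ 2) (a : A) : s a ≤ P a + 2 * d := by
  have t : ∀ a, (√(s a) - √(P a)) ^ 2 + s a - P a ≤ s a * Real.log (s a / P a) := by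
    intro a
    have q1 : √(s a) ^ 2 = s a := Real.sq_sqrt (hs0 a)
    have q2 : √(P a) ^ 2 = P a := Real.sq_sqrt (hP0 a)
    rcases (hs0 a).eq_or_lt with h0 | h0
    · rw [← h0]; simp [q2]
    · have p1 : 0 < √(s a) := Real.sqrt_pos.mpr h0
      have p2 : 0 < √(P a) := Real.sqrt_pos.mpr (hsP a h0)
      have hl : Real.log (s a / P a) = 2 * Real.log (√(s a) / √(P a)) := by
        rw [← Real.sqrt_div (hs0 a), Real.log_sqrt (div_nonneg (hs0 a) (hP0 a))]; ring
      have := Real.one_sub_inv_le_log_of_pos (div_pos p1 p2)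
      rw [inv_div] at this
      rw [hl]
      have e : s a * (2 * (1 - √(P a) / √(s a))) = (√(s a) - √(P a)) ^ 2 + s a - P a := by
        rw [← q1, ← q2, Real.sqrt_sq p1.le, Real.sqrt_sq p2.le]
        field_simp
        ring
      rw [← e]
      exact mul_le_mul_of_nonneg_left (by linarith) h0.le
  have sm := Finset.sum_le_sum fun a (_ : a ∈ Finset.univ) => t a
  rw [Finset.sum_sub_distrib, Finset.sum_add_distrib, hs1, hP1] at sm
  have one : (√(s a) - √(P a)) ^ 2 ≤ d ^ 2 := by
    have := Finset.single_le_sum (f := fun a => (√(s a) - √(P a)) ^ 2) (fun a _ => sq_nonneg _)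
      (Finset.mem_univ a)
    linarith
  have hab := abs_le_of_sq_le_sq one hd
  have s1 : s a ≤ 1 := hs1 ▸ Finset.single_le_sum (fun a _ => hs0 a) (Finset.mem_univ a)
  have P1 : P a ≤ 1 := hP1 ▸ Finset.single_le_sum (fun a _ => hP0 a) (Finset.mem_univ a)
  have r1 : √(s a) ≤ 1 := Real.sqrt_le_one.mpr s1
  have r2 : √(P a) ≤ 1 := Real.sqrt_le_one.mpr P1
  have q1 : √(s a) ^ 2 = s a := Real.sq_sqrt (hs0 a)
  have q2 : √(P a) ^ 2 = P a := Real.sq_sqrt (hP0 a)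
  have := Real.sqrt_nonneg (s a)
  have := Real.sqrt_nonneg (P a)
  nlinarith [(abs_le.mp hab).2]

variable {X Y : Type} [Fintype X] [Fintype Y] {PXY : X → Y → ℝ} {PX : X → ℝ}
    {PY : Y → ℝ} {W : X → Y → ℝ}

theorem Src.stepX (h : Src PXY PX PY W) {V : Type*} [Fintype V] (σ : V → X → ℝ)
    (h0 : ∀ v x, 0 ≤ σ v x) (hs : ∑ x, ∑ v, σ v x = 1) {μ : ℝ} (hμ0 : 0 < μ) (hμ1 : μ ≤ 1)
    (hμ : ∀ x, μ * ∑ v, σ v x ≤ PX x) {B : ℝ} (hB0 : 0 ≤ B)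
    (hB : ∀ x, 0 < PX x → -Real.log (PX x) ≤ B) {R δ : ℝ} (hR : 0 ≤ R) (hδ : 0 < δ)
    (hI : Iof σ PX ≤ R * Real.log 2 + δ) :
    μ * Iof (fun v y => ∑ x, σ v x * W x y) PY ≤
      Real.log 2 * sSup (ES PXY R) + (δ + (1 - μ) * B) := by
  have hl2 := Real.log_pos one_lt_two
  set ρ : X → ℝ := fun x => PX x - μ * ∑ v, σ v x with hρ
  have hρ0 : ∀ x, 0 ≤ ρ x := fun x => sub_nonneg.mpr (hμ x)
  have hρs : ∑ x, ρ x = 1 - μ := by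
    simp only [hρ]
    rw [Finset.sum_sub_distrib, h.px1, ← Finset.mul_sum, hs, mul_one]
  let τ' : Option V → X → ℝ := fun v x => v.elim (ρ x) (fun v => μ * σ v x)
  have hτ0 : ∀ v x, 0 ≤ τ' v x := fun v x => by
      cases v with
      | none => exact hρ0 x
      | some v => exact mul_nonneg hμ0.le (h0 v x)
  have i1 := Iof_option τ' σ ρ PX μ hμ0 (fun _ _ => rfl) (fun _ => rfl)
  have i2 := Iof_option (fun v y => ∑ x, τ' v x * W x y) (fun v y => ∑ x, σ v x * W x y)
      (fun y => ∑ x, ρ x * W x y) PY μ hμ0 (fun v y => by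
        simp only [τ', Option.elim, Finset.mul_sum, mul_assoc]) (fun y => rfl)
  have x1 : ∑ x, ρ x * Real.log (ρ x / ((∑ a', ρ a') * PX x)) ≤ (1 - μ) * B := by
    rw [← hρs, Finset.sum_mul]
    refine sum_log_mono hρ0 fun x hx => ?_
    have hpx : 0 < PX x := by
      have := mul_nonneg hμ0.le (Finset.sum_nonneg fun v (_ : v ∈ Finset.univ) => h0 v x)
      simp only [hρ] at hx; linarith
    have hle : ρ x ≤ ∑ a', ρ a' := Finset.single_le_sum (fun a _ => hρ0 a) (Finset.mem_univ x)
    have hsp : 0 < ∑ a', ρ a' := hx.trans_le hle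
    refine le_trans ?_ (hB x hpx)
    rw [← Real.log_inv]
    refine Real.log_le_log (by positivity) ?_
    rw [div_le_iff₀ (by positivity)]
    field_simp
    exact hle
  have x2 : 0 ≤ ∑ y, (∑ x, ρ x * W x y) * Real.log ((∑ x, ρ x * W x y) /
      ((∑ y', ∑ x, ρ x * W x y') * PY y)) := by
    refine kl_row_nonneg (fun y => ∑ x, ρ x * W x y) PY (fun y => Finset.sum_nonneg fun x _ =>
      mul_nonneg (hρ0 x) (h.w0 x y)) h.py0 h.py1.le fun y hy => hy.trans_le ?_
    rw [h.py]
    refine Finset.sum_le_sum fun x _ => ?_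
    rw [h.fac]
    refine mul_le_mul_of_nonneg_right ?_ (h.w0 x y)
    have := mul_nonneg hμ0.le (Finset.sum_nonneg fun v (_ : v ∈ Finset.univ) => h0 v x)
    simp only [hρ]; linarith
  have hB1 : 0 ≤ (1 - μ) * B := mul_nonneg (by linarith) hB0
  have hm := h.eta_lip τ' hτ0 (fun x => by
        rw [Fintype.sum_option]
        simp only [τ', Option.elim, hρ]
        rw [← Finset.mul_sum]; ring) R (δ + (1 - μ) * B) hR (by linarith) (by
        rw [i1]
        have : μ * Iof σ PX ≤ μ * (R * Real.log 2 + δ) := mul_le_mul_of_nonneg_left hI hμ0.le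
        have h2 : μ * (R * Real.log 2 + δ) ≤ 1 * (R * Real.log 2 + δ) :=
          mul_le_mul_of_nonneg_right hμ1 (by positivity)
        linarith)
  rw [i2] at hm
  linarith

theorem Src.stepY (h : Src PXY PX PY W) {V : Type*} [Fintype V] (s : V × X × Y → ℝ)
    (hs : IsPMF s) (hsupp : ∀ z, 0 < s z → 0 < PXY z.2.1 z.2.2)
    {B : ℝ} (hB0 : 0 ≤ B) (hB : ∀ y, 0 < PY y → -Real.log (PY y) ≤ B) {δ t : ℝ}
    (ht : 0 < t) (htB : t * B ≤ 1)
    (hc : ∑ z, s z * Real.log (s z / ((∑ y, s (z.1, z.2.1, y)) * W z.2.1 z.2.2)) ≤ δ) :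
    Iof (fun v y => ∑ x, s (v, x, y)) PY ≤
      Iof (fun v y => ∑ x, (∑ y', s (v, x, y')) * W x y) PY +
        (t * (Fintype.card Y * (8 + 2 * B ^ 2)) + δ / t + δ) ∧
    Iof (fun v y => ∑ x, (∑ y', s (v, x, y')) * W x y) PY ≤ B := by
  classical
  set sUX : V → X → ℝ := fun v x => ∑ y, s (v, x, y) with hsUX
  set sU : V → ℝ := fun v => ∑ x, sUX v x with hsU
  set sUY : V → Y → ℝ := fun v y => ∑ x, s (v, x, y) with hsUY
  set sh : V → Y → ℝ := fun v y => ∑ x, sUX v x * W x y with hsh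
  have sUX0 : ∀ v x, 0 ≤ sUX v x := fun v x => Finset.sum_nonneg fun y _ => hs.1 _
  have sU0 : ∀ v, 0 ≤ sU v := fun v => Finset.sum_nonneg fun x _ => sUX0 v x
  have sUY0 : ∀ v y, 0 ≤ sUY v y := fun v y => Finset.sum_nonneg fun x _ => hs.1 _
  have sh0 : ∀ v y, 0 ≤ sh v y := fun v y => Finset.sum_nonneg fun x _ =>
    mul_nonneg (sUX0 v x) (h.w0 x y)
  have sUY_sum : ∀ v, ∑ y, sUY v y = sU v := fun v => by
    simp only [hsUY, hsU, hsUX]; exact Finset.sum_comm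
  have sh_sum : ∀ v, ∑ y, sh v y = sU v := fun v => h.row_sum (sUX v)
  have sU1 : ∑ v, sU v = 1 := by
    rw [← hs.2]; simp only [hsU, hsUX, Fintype.sum_prod_type]
  have le1 : ∀ z : V × X × Y, s z ≤ sUX z.1 z.2.1 := fun z =>
    Finset.single_le_sum (f := fun y => s (z.1, z.2.1, y)) (fun y _ => hs.1 _)
      (Finset.mem_univ z.2.2)
  have le2 : ∀ z : V × X × Y, s z ≤ sUY z.1 z.2.2 := fun z =>
    Finset.single_le_sum (f := fun x => s (z.1, x, z.2.2)) (fun y _ => hs.1 _)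
      (Finset.mem_univ z.2.1)
  have le3 : ∀ v y, sh v y ≤ sU v := fun v y => by
    rw [← sh_sum]; exact Finset.single_le_sum (fun y _ => sh0 v y) (Finset.mem_univ y)
  have pPX : ∀ v x, 0 < sUX v x → 0 < PX x := by
    intro v x hx
    obtain ⟨y, -, hy⟩ := (Finset.sum_pos_iff_of_nonneg (fun y _ => hs.1 (v, x, y))).mp hx
    have := hsupp _ hy
    rw [h.fac] at this
    exact pos_of_mul_pos_left this (h.w0 _ _)
  have pPY : ∀ v y, 0 < sh v y → 0 < PY y := by
    intro v y hy
    obtain ⟨x, -, hx⟩ := (Finset.sum_pos_iff_of_nonneg (fun x _ =>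
      mul_nonneg (sUX0 v x) (h.w0 x y))).mp hy
    have a1 := pos_of_mul_pos_left hx (h.w0 _ _)
    have a2 := pos_of_mul_pos_right hx (sUX0 _ _)
    rw [h.py]
    simp_rw [h.fac]
    exact (mul_pos (pPX v x a1) a2).trans_le (Finset.single_le_sum (f := fun x => PX x * W x y)
        (fun x _ => mul_nonneg (h.px0 _) (h.w0 _ _)) (Finset.mem_univ x))
  have ps : ∀ z, 0 < s z → 0 < sUX z.1 z.2.1 ∧ 0 < W z.2.1 z.2.2 ∧ 0 < sUY z.1 z.2.2 ∧
      0 < sh z.1 z.2.2 := by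
    intro z hz
    have a1 := hz.trans_le (le1 z)
    have a2 := hsupp z hz
    rw [h.fac] at a2
    have a3 := pos_of_mul_pos_right a2 (h.px0 _)
    exact ⟨a1, a3, hz.trans_le (le2 z), (mul_pos a1 a3).trans_le (Finset.single_le_sum
      (f := fun x => sUX z.1 x * W x z.2.2) (fun x _ => mul_nonneg (sUX0 _ _) (h.w0 _ _))
      (Finset.mem_univ z.2.1))⟩
  have psY : ∀ v y, 0 < sUY v y → 0 < sh v y := by
    intro v y hy
    obtain ⟨x, -, hx⟩ := (Finset.sum_pos_iff_of_nonneg (fun x _ => hs.1 (v, x, y))).mp hy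
    exact (ps (v, x, y) hx).2.2.2
  have psU : ∀ v y, 0 < sh v y → 0 < sU v := fun v y hy => hy.trans_le (le3 v y)
  -- F and logs
  set F : V → Y → ℝ := fun v y => sh v y / (sU v * PY y) with hF
  have logF : ∀ v y, 0 < sh v y → Real.log (F v y) ≤ B := by
    intro v y hy
    have a := pPY v y hy
    have b := psU v y hy
    refine le_trans ?_ (hB y a)
    rw [← Real.log_inv]
    refine Real.log_le_log (by simp only [hF]; positivity) ?_
    simp only [hF]
    rw [div_le_iff₀ (by positivity)]
    field_simp
    exact le3 v y
  have hG : Iof sh PY = ∑ z : V × Y, sh z.1 z.2 * Real.log (F z.1 z.2) := by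
    unfold Iof
    simp_rw [sh_sum]
    rw [Fintype.sum_prod_type]
  have hI : Iof sUY PY = ∑ z : V × Y, sUY z.1 z.2 *
      Real.log (sUY z.1 z.2 / (sU z.1 * PY z.2)) := by
    unfold Iof
    simp_rw [sUY_sum]
    rw [Fintype.sum_prod_type]
  have sUY1 : ∑ z : V × Y, sUY z.1 z.2 = 1 := by
    rw [Fintype.sum_prod_type]; simp only; simp_rw [sUY_sum]; exact sU1
  have sh1 : ∑ z : V × Y, sh z.1 z.2 = 1 := by
    rw [Fintype.sum_prod_type]; simp only; simp_rw [sh_sum]; exact sU1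
  -- (i)
  have k1 : ∑ z : V × Y, sUY z.1 z.2 * Real.log (sUY z.1 z.2 / sh z.1 z.2) ≤ δ := by
    have k := sum_log_nonpos (g := fun z => sUY z.1 z.2.2 * sUX z.1 z.2.1 * W z.2.1 z.2.2 /
      (sh z.1 z.2.2 * s z)) hs.1 hs.2 (fun z hz => by
        obtain ⟨a, b, c, d⟩ := ps z hz
        positivity) (by
        calc _ ≤ ∑ z : V × X × Y, sUY z.1 z.2.2 / sh z.1 z.2.2 *
                (sUX z.1 z.2.1 * W z.2.1 z.2.2) := by
              refine Finset.sum_le_sum fun z _ => ?_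
              rcases (hs.1 z).eq_or_lt with hz | hz
              · rw [← hz, zero_mul]
                exact mul_nonneg (div_nonneg (sUY0 _ _) (sh0 _ _))
                  (mul_nonneg (sUX0 _ _) (h.w0 _ _))
              · obtain ⟨a, b, c, d⟩ := ps z hz
                apply le_of_eq; field_simp
          _ = ∑ v, ∑ y, sUY v y / sh v y * sh v y := by
              rw [Fintype.sum_prod_type]
              refine Finset.sum_congr rfl fun v _ => ?_
              rw [Fintype.sum_prod_type, Finset.sum_comm]
              refine Finset.sum_congr rfl fun y _ => ?_
              simp only [hsh]
              rw [Finset.mul_sum]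
          _ ≤ ∑ v, ∑ y, sUY v y := by
              refine Finset.sum_le_sum fun v _ => Finset.sum_le_sum fun y _ => ?_
              rcases (sh0 v y).eq_or_lt with hy | hy
              · rw [← hy, mul_zero]; exact sUY0 v y
              · rw [div_mul_cancel₀ _ hy.ne']
          _ ≤ 1 := by simp_rw [sUY_sum]; exact sU1.le)
    have e : ∑ z, s z * Real.log (sUY z.1 z.2.2 * sUX z.1 z.2.1 * W z.2.1 z.2.2 /
      (sh z.1 z.2.2 * s z)) = ∑ z, s z * Real.log (sUY z.1 z.2.2 / sh z.1 z.2.2) -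
        ∑ z, s z * Real.log (s z / (sUX z.1 z.2.1 * W z.2.1 z.2.2)) := by
      rw [← Finset.sum_sub_distrib]
      simp_rw [← mul_sub]
      refine sum_log_congr hs.1 fun z hz => ?_
      obtain ⟨a, b, c, d⟩ := ps z hz
      rw [← Real.log_div (by positivity) (by positivity)]
      congr 1
      field_simp
    have e2 : ∑ z, s z * Real.log (sUY z.1 z.2.2 / sh z.1 z.2.2) =
        ∑ z : V × Y, sUY z.1 z.2 * Real.log (sUY z.1 z.2 / sh z.1 z.2) := by
      rw [Fintype.sum_prod_type, Fintype.sum_prod_type]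
      refine Finset.sum_congr rfl fun v _ => ?_
      rw [Fintype.sum_prod_type, Finset.sum_comm]
      refine Finset.sum_congr rfl fun y _ => ?_
      simp only
      rw [← Finset.sum_mul]
    linarith
  set D := ∑ z : V × Y, sUY z.1 z.2 * Real.log (sUY z.1 z.2 / sh z.1 z.2) with hD
  -- second moment
  have k2 : ∑ z : V × Y, sh z.1 z.2 * Real.log (F z.1 z.2) ^ 2 ≤
      Fintype.card Y * (8 + 2 * B ^ 2) := by
    have hterm : ∀ v y, sh v y * Real.log (F v y) ^ 2 ≤ sU v * (8 + 2 * B ^ 2) := by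
      intro v y
      rcases (sh0 v y).eq_or_lt with hy | hy
      · rw [← hy, zero_mul]; exact mul_nonneg (sU0 v) (by positivity)
      · have a := pPY v y hy
        have b := psU v y hy
        set q := sh v y / sU v with hq
        have q0 : 0 < q := div_pos hy b
        have q1 : q ≤ 1 := (div_le_one b).mpr (le3 v y)
        have eF : Real.log (F v y) = Real.log q - Real.log (PY y) := by
          rw [← Real.log_div q0.ne' a.ne']
          congr 1
          simp only [hF, hq]; field_simp
        have es : sh v y = sU v * q := by simp only [hq]; field_simp
        have P1 : PY y ≤ 1 := by
          rw [← h.py1]; exact Finset.single_le_sum (fun y _ => h.py0 y) (Finset.mem_univ y)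
        have hl0 : Real.log (PY y) ≤ 0 := Real.log_nonpos a.le P1
        have hlB := hB y a
        rw [eF, es, mul_assoc]
        refine mul_le_mul_of_nonneg_left ?_ b.le
        have m1 := mul_log_sq q0 q1
        have m2 : Real.log (PY y) ^ 2 ≤ B ^ 2 := by nlinarith
        have m3 : (Real.log q - Real.log (PY y)) ^ 2 ≤ 2 * Real.log q ^ 2 + 2 * B ^ 2 := by
          nlinarith [sq_nonneg (Real.log q + Real.log (PY y))]
        calc q * (Real.log q - Real.log (PY y)) ^ 2
            ≤ q * (2 * Real.log q ^ 2 + 2 * B ^ 2) := mul_le_mul_of_nonneg_left m3 q0.le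
          _ ≤ 8 + 2 * B ^ 2 := by nlinarith [sq_nonneg B]
    rw [Fintype.sum_prod_type]
    calc _ ≤ ∑ v, ∑ _y : Y, sU v * (8 + 2 * B ^ 2) :=
          Finset.sum_le_sum fun v _ => Finset.sum_le_sum fun y _ => hterm v y
      _ = _ := by
          simp only [Finset.sum_const, Finset.card_univ, nsmul_eq_mul]
          rw [← Finset.mul_sum, ← Finset.sum_mul, sU1, one_mul]
  have k3 : t * ∑ z : V × Y, sUY z.1 z.2 * Real.log (F z.1 z.2) - D ≤
      t * Iof sh PY + t ^ 2 * (Fintype.card Y * (8 + 2 * B ^ 2)) := by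
    have k := sum_log_le (p := fun z : V × Y => sUY z.1 z.2) (g := fun z : V × Y =>
      sh z.1 z.2 / sUY z.1 z.2 *
      Real.exp (t * Real.log (F z.1 z.2))) (fun z => sUY0 _ _) sUY1 (fun z hz =>
        mul_pos (div_pos (psY _ _ hz) hz) (Real.exp_pos _))
    have e : ∑ z : V × Y, sUY z.1 z.2 * Real.log (sh z.1 z.2 / sUY z.1 z.2 *
      Real.exp (t * Real.log (F z.1 z.2))) =
        t * ∑ z : V × Y, sUY z.1 z.2 * Real.log (F z.1 z.2) - D := by
      rw [hD, Finset.mul_sum, ← Finset.sum_sub_distrib]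
      simp_rw [mul_left_comm t, ← mul_sub]
      refine sum_log_congr (fun z : V × Y => sUY0 z.1 z.2) fun z hz => ?_
      have a := psY _ _ hz
      rw [Real.log_mul (by positivity) (by positivity), Real.log_exp, Real.log_div a.ne' hz.ne',
        Real.log_div hz.ne' a.ne']
      ring
    have u : ∑ z : V × Y, sUY z.1 z.2 * (sh z.1 z.2 / sUY z.1 z.2 *
      Real.exp (t * Real.log (F z.1 z.2))) ≤ ∑ z : V × Y, (sh z.1 z.2 +
        t * (sh z.1 z.2 * Real.log (F z.1 z.2)) +
        t ^ 2 * (sh z.1 z.2 * Real.log (F z.1 z.2) ^ 2)) := by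
      refine Finset.sum_le_sum fun z _ => ?_
      have r1 : sUY z.1 z.2 * (sh z.1 z.2 / sUY z.1 z.2 *
          Real.exp (t * Real.log (F z.1 z.2))) ≤
          sh z.1 z.2 * Real.exp (t * Real.log (F z.1 z.2)) := by
        rcases (sUY0 z.1 z.2).eq_or_lt with hy | hy
        · rw [← hy, zero_mul]; exact mul_nonneg (sh0 _ _) (Real.exp_pos _).le
        · apply le_of_eq; field_simp
      refine r1.trans ?_
      rcases (sh0 z.1 z.2).eq_or_lt with hy | hy
      · rw [← hy]; simp
      · have := exp_quad (z := t * Real.log (F z.1 z.2))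
          ((mul_le_mul_of_nonneg_left (logF _ _ hy) ht.le).trans htB)
        have := mul_le_mul_of_nonneg_left this hy.le
        refine this.trans (le_of_eq ?_)
        ring
    rw [Finset.sum_add_distrib, Finset.sum_add_distrib, sh1, ← Finset.mul_sum, ← Finset.mul_sum,
      ← hG] at u
    have := mul_le_mul_of_nonneg_left k2 (sq_nonneg t)
    linarith
  have k4 : Iof sUY PY = ∑ z : V × Y, sUY z.1 z.2 * Real.log (F z.1 z.2) + D := by
    rw [hI, hD, ← Finset.sum_add_distrib]
    simp_rw [← mul_add]
    refine sum_log_congr (fun z : V × Y => sUY0 z.1 z.2) fun z hz => ?_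
    have a := psY _ _ hz
    have b := pPY _ _ a
    have c := psU _ _ a
    rw [← Real.log_mul (by simp only [hF]; positivity) (by positivity)]
    congr 1
    simp only [hF]; field_simp
  refine ⟨?_, ?_⟩
  · set E := ∑ z : V × Y, sUY z.1 z.2 * Real.log (F z.1 z.2)
    have : E ≤ Iof sh PY + t * (Fintype.card Y * (8 + 2 * B ^ 2)) + δ / t := by
      have h1 : t * E ≤ t * (Iof sh PY + t * (Fintype.card Y * (8 + 2 * B ^ 2)) + δ / t) := by
        have : t * (δ / t) = δ := by field_simp
        nlinarith
      exact le_of_mul_le_mul_left h1 ht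
    linarith
  · rw [hG]
    calc _ ≤ ∑ z : V × Y, sh z.1 z.2 * B :=
          sum_log_mono (fun z : V × Y => sh0 z.1 z.2) fun z hz => logF _ _ hz
      _ = B := by rw [← Finset.sum_mul, sh1, one_mul]

theorem exists_log_bound {A : Type*} [Fintype A] (Q : A → ℝ) :
    ∃ B : ℝ, 0 ≤ B ∧ ∀ a, -Real.log (Q a) ≤ B :=
  ⟨∑ a, |Real.log (Q a)|, Finset.sum_nonneg fun _ _ => abs_nonneg _, fun a =>
    (neg_le_abs _).trans (Finset.single_le_sum (f := fun a => |Real.log (Q a)|)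
      (fun _ _ => abs_nonneg _) (Finset.mem_univ a))⟩

theorem Src.perturb (h : Src PXY PX PY W) {R : ℝ} (hR : 0 ≤ R) {ε : ℝ} (hε : 0 < ε) :
    ∃ δ : ℝ, 0 < δ ∧ ∀ (V : Type) [Fintype V] (s : V × X × Y → ℝ), IsPMF s →
      (∀ z, 0 < s z → 0 < PXY z.2.1 z.2.2) →
      ∑ z, s z * Real.log (s z / ((∑ x, ∑ y, s (z.1, x, y)) * PXY z.2.1 z.2.2)) ≤
        R * Real.log 2 + δ →
      ∑ z, s z * Real.log (s z / ((∑ y, s (z.1, z.2.1, y)) * W z.2.1 z.2.2)) ≤ δ →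
      ∑ x, (∑ v, ∑ y, s (v, x, y)) * Real.log ((∑ v, ∑ y, s (v, x, y)) / PX x) ≤ δ →
      Iof (fun v y => ∑ x, s (v, x, y)) PY ≤ Real.log 2 * sSup (ES PXY R) + ε := by
  obtain ⟨B1, hB10, hB1⟩ := exists_log_bound PX
  obtain ⟨B2, hB20, hB2⟩ := exists_log_bound PY
  set B := B1 + B2 with hB
  have hBX : ∀ x, -Real.log (PX x) ≤ B := fun x => (hB1 x).trans (by linarith)
  have hBY : ∀ x, -Real.log (PY x) ≤ B := fun x => (hB2 x).trans (by linarith)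
  have hB0 : 0 ≤ B := by linarith
  set c : ℝ := Fintype.card Y * (8 + 2 * B ^ 2) with hc
  have hc0 : 0 ≤ c := by positivity
  set Q := 3 + 4 * Real.exp B * B + c with hQ
  have hQ0 : 0 < Q := by positivity
  obtain ⟨d, hd0, hd1, hdB, hdQ⟩ : ∃ d : ℝ, 0 < d ∧ d ≤ 1 ∧ d * B ≤ 1 ∧ d * Q ≤ ε := by
    refine ⟨min 1 (min (1 / (B + 1)) (ε / Q)), by positivity, min_le_left _ _, ?_, ?_⟩
    · have : min 1 (min (1 / (B + 1)) (ε / Q)) ≤ 1 / (B + 1) :=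
        (min_le_right _ _).trans (min_le_left _ _)
      calc _ ≤ 1 / (B + 1) * B := mul_le_mul_of_nonneg_right this hB0
        _ ≤ 1 := by rw [div_mul_eq_mul_div, one_mul, div_le_one (by linarith)]; linarith
    · have : min 1 (min (1 / (B + 1)) (ε / Q)) ≤ ε / Q :=
        (min_le_right _ _).trans (min_le_right _ _)
      rwa [le_div_iff₀ hQ0] at this
  refine ⟨d ^ 2, by positivity, ?_⟩
  intro V _ s hs hsupp hb hcc hdd
  obtain ⟨y1, y2⟩ := h.stepY s hs hsupp hB0 (fun y _ => hBY y) hd0 hdB hcc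
  rw [← hc] at y1
  set G := Iof (fun v y => ∑ x, (∑ y', s (v, x, y')) * W x y) PY
  set sUX : V → X → ℝ := fun v x => ∑ y, s (v, x, y) with hsUX
  have sUX0 : ∀ v x, 0 ≤ sUX v x := fun v x => Finset.sum_nonneg fun y _ => hs.1 _
  have sU_pos : ∀ z, 0 < s z → 0 < sUX z.1 z.2.1 ∧ 0 < ∑ x, sUX z.1 x := by
    intro z hz
    have a : 0 < sUX z.1 z.2.1 := hz.trans_le (Finset.single_le_sum
      (f := fun y => s (z.1, z.2.1, y)) (fun y _ => hs.1 _) (Finset.mem_univ z.2.2))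
    exact ⟨a, a.trans_le (Finset.single_le_sum (f := fun x => sUX z.1 x)
      (fun x _ => sUX0 _ _) (Finset.mem_univ z.2.1))⟩
  have hPW : ∀ z : V × X × Y, 0 < s z → 0 < PX z.2.1 ∧ 0 < W z.2.1 z.2.2 := fun z hz => by
    have a2 := hsupp z hz
    rw [h.fac] at a2
    exact ⟨pos_of_mul_pos_left a2 (h.w0 _ _), pos_of_mul_pos_right a2 (h.px0 _)⟩
  have sum1 : ∑ x, ∑ v, sUX v x = 1 := by
    rw [Finset.sum_comm, ← hs.2]; simp only [hsUX, Fintype.sum_prod_type]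
  -- bound on I(U;X)
  have hIX : Iof sUX PX ≤ R * Real.log 2 + d ^ 2 := by
    have e1 : Iof sUX PX = ∑ z, s z * Real.log (sUX z.1 z.2.1 /
        ((∑ x, sUX z.1 x) * PX z.2.1)) := by
      unfold Iof
      simp only [Fintype.sum_prod_type]
      refine Finset.sum_congr rfl fun v _ => Finset.sum_congr rfl fun x _ => ?_
      rw [← Finset.sum_mul]
    have e2 : ∑ z, s z * Real.log (s z / ((∑ x, sUX z.1 x) * PXY z.2.1 z.2.2)) =
        ∑ z, s z * Real.log (sUX z.1 z.2.1 / ((∑ x, sUX z.1 x) * PX z.2.1)) +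
        ∑ z, s z * Real.log (s z / (sUX z.1 z.2.1 * W z.2.1 z.2.2)) := by
      rw [← Finset.sum_add_distrib]
      simp_rw [← mul_add]
      refine sum_log_congr hs.1 fun z hz => ?_
      obtain ⟨a, b⟩ := sU_pos z hz
      obtain ⟨c, d⟩ := hPW z hz
      rw [← Real.log_mul (by positivity) (by positivity), h.fac]
      congr 1
      field_simp
    have e3 : 0 ≤ ∑ z, s z * Real.log (s z / (sUX z.1 z.2.1 * W z.2.1 z.2.2)) := by
      simp only [Fintype.sum_prod_type]
      refine Finset.sum_nonneg fun v _ => Finset.sum_nonneg fun x _ => ?_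
      exact kl_row_nonneg (fun y => s (v, x, y)) (W x) (fun y => hs.1 _) (h.w0 x) (h.w1 x).le
        (fun y hy => (hPW _ hy).2)
    rw [e1]
    have hb' : ∑ z, s z * Real.log (s z / ((∑ x, sUX z.1 x) * PXY z.2.1 z.2.2)) ≤
      R * Real.log 2 + d ^ 2 := hb
    linarith
  -- closeness
  set κ := 2 * d * Real.exp B with hκ
  have hκ0 : 0 < κ := by positivity
  set μ := 1 / (1 + κ) with hμ
  have hμ0 : 0 < μ := by positivity
  have hμ1 : μ ≤ 1 := by rw [hμ, div_le_one (by linarith)]; linarith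
  have hμκ : 1 - μ ≤ κ := by
    have : 1 - μ = κ / (1 + κ) := by rw [hμ]; field_simp; ring
    rw [this, div_le_iff₀ (by linarith)]
    nlinarith
  have hsPX : ∀ x, 0 < (∑ v, sUX v x) → 0 < PX x := by
    intro x hx
    obtain ⟨v, -, hv⟩ := (Finset.sum_pos_iff_of_nonneg (fun v _ => sUX0 v x)).mp hx
    obtain ⟨y, -, hy⟩ := (Finset.sum_pos_iff_of_nonneg (fun y _ => hs.1 (v, x, y))).mp hv
    exact (hPW _ hy).1
  have hsX0 : ∀ x, 0 ≤ ∑ v, sUX v x := fun x => Finset.sum_nonneg fun v _ => sUX0 v x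
  have hcl : ∀ x, μ * ∑ v, sUX v x ≤ PX x := by
    intro x
    have hh := hellinger hsX0 sum1 h.px0 h.px1 hsPX hd0.le hdd x
    rcases (hsX0 x).eq_or_lt with hx | hx
    · rw [← hx, mul_zero]; exact h.px0 x
    · have hp := hsPX x hx
      have : 1 ≤ Real.exp B * PX x := by
        have h1 : Real.exp (-B) ≤ PX x := by
          rw [← Real.exp_log hp]
          exact Real.exp_le_exp.mpr (by linarith [hBX x])
        have h2 : Real.exp B * Real.exp (-B) = 1 := by rw [← Real.exp_add]; simp
        have := mul_le_mul_of_nonneg_left h1 (Real.exp_pos B).le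
        linarith
      rw [hμ, div_mul_eq_mul_div, one_mul, div_le_iff₀ (by linarith)]
      have : 2 * d * 1 ≤ 2 * d * (Real.exp B * PX x) := mul_le_mul_of_nonneg_left this (by positivity)
      rw [hκ]
      linarith
  have x1 := h.stepX sUX sUX0 sum1 hμ0 hμ1 hcl hB0 (fun x _ => hBX x) hR (by positivity) hIX
  have x1' : μ * G ≤ Real.log 2 * sSup (ES PXY R) + (d ^ 2 + (1 - μ) * B) := x1
  have g1 : (1 - μ) * G ≤ (1 - μ) * B := mul_le_mul_of_nonneg_left y2 (by linarith)
  have g2 : (1 - μ) * B ≤ κ * B := mul_le_mul_of_nonneg_right hμκ hB0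
  have g3 : d ^ 2 / d = d := by field_simp
  have g4 : d ^ 2 ≤ d := by nlinarith
  rw [g3] at y1
  have g5 : d * Q = 3 * d + 2 * (κ * B) + d * c := by rw [hQ, hκ]; ring
  linarith

end Perturb


section Hop

theorem pe_exists {Ω α : Type*} [Fintype Ω] {p : Ω → ℝ} {X : Ω → α} {a : α}
    (h : 0 < probEq p X a) (hp : ∀ ω, 0 ≤ p ω) : ∃ ω, 0 < p ω ∧ X ω = a := by
  classical
  by_contra hc
  push Not at hc
  have : probEq p X a = 0 := by
    unfold probEq
    refine Finset.sum_eq_zero fun ω _ => ?_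
    split_ifs with h1
    · by_contra h2
      exact hc ω ((hp ω).lt_of_ne (Ne.symm h2)) h1
    · rfl
  linarith

variable {X Y : Type} [Fintype X] [Fintype Y] {PXY : X → Y → ℝ} {PX : X → ℝ}
    {PY : Y → ℝ} {W : X → Y → ℝ}

theorem Src.mix (h : Src PXY PX PY W) {R : ℝ} (hR : 0 ≤ R) {ε : ℝ} (hε : 0 < ε) :
    ∃ δ : ℝ, 0 < δ ∧ ∀ (Ω V : Type) [Fintype Ω] [Fintype V] (p : Ω → ℝ) (_ : IsPMF p)
      (n : ℕ) (_ : 0 < n) (U : Fin n → Ω → V) (A : Fin n → Ω → X) (B : Fin n → Ω → Y),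
      (∀ t ω, 0 < p ω → 0 < PXY (A t ω) (B t ω)) →
      ∑ t, ∑ ω, p ω * Real.log (probEq p (fun ω => (U t ω, A t ω, B t ω)) (U t ω, A t ω, B t ω) /
        (probEq p (U t) (U t ω) * PXY (A t ω) (B t ω))) ≤ n * (R * Real.log 2 + δ) →
      ∑ t, ∑ ω, p ω * Real.log (probEq p (fun ω => (U t ω, A t ω, B t ω)) (U t ω, A t ω, B t ω) /
        (probEq p (fun ω => (U t ω, A t ω)) (U t ω, A t ω) * W (A t ω) (B t ω))) ≤ n * δ →
      ∑ x, ((n : ℝ)⁻¹ * ∑ t, probEq p (A t) x) *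
        Real.log (((n : ℝ)⁻¹ * ∑ t, probEq p (A t) x) / PX x) ≤ δ →
      ∑ t, ∑ ω, p ω * Real.log (probEq p (fun ω => (U t ω, B t ω)) (U t ω, B t ω) /
        (probEq p (U t) (U t ω) * PY (B t ω))) ≤ n * (Real.log 2 * sSup (ES PXY R) + ε) := by
  obtain ⟨δ, hδ, H⟩ := h.perturb hR hε
  refine ⟨δ, hδ, ?_⟩
  intro Ω V _ _ p hp n hn U A B hpos hb hc hd
  have hn' : (0 : ℝ) < n := Nat.cast_pos.mpr hn
  have hni : (n : ℝ)⁻¹ ≠ 0 := inv_ne_zero hn'.ne'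
  set s : (Fin n × V) × X × Y → ℝ := fun z =>
    (n : ℝ)⁻¹ * probEq p (fun ω => (U z.1.1 ω, A z.1.1 ω, B z.1.1 ω)) (z.1.2, z.2.1, z.2.2) with hs
  have m1 : ∀ t v, ∑ x, ∑ y, s ((t, v), x, y) = (n : ℝ)⁻¹ * probEq p (U t) v := fun t v => by
    rw [← pe_pair_sum p (U t) (fun ω => (A t ω, B t ω)) v, Fintype.sum_prod_type]
    simp only [hs, Finset.mul_sum]
  have m2 : ∀ t v x, ∑ y, s ((t, v), x, y) =
      (n : ℝ)⁻¹ * probEq p (fun ω => (U t ω, A t ω)) (v, x) := fun t v x => by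
    rw [← pe_pair_sum p (fun ω => (U t ω, A t ω)) (B t) (v, x), Finset.mul_sum]
    refine Finset.sum_congr rfl fun y _ => ?_
    simp only [hs]
    rw [pe_congr p (Z := fun ω => ((U t ω, A t ω), B t ω)) (b := ((v, x), y))]
    intro ω; simp [and_assoc]
  have m3 : ∀ t v y, ∑ x, s ((t, v), x, y) =
      (n : ℝ)⁻¹ * probEq p (fun ω => (U t ω, B t ω)) (v, y) := fun t v y => by
    rw [← pe_pair_sum p (fun ω => (U t ω, B t ω)) (A t) (v, y), Finset.mul_sum]
    refine Finset.sum_congr rfl fun x _ => ?_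
    simp only [hs]
    rw [pe_congr p (Z := fun ω => ((U t ω, B t ω), A t ω)) (b := ((v, y), x))]
    intro ω; simp only [Prod.mk.injEq]; tauto
  have m4 : ∀ x, ∑ v, ∑ y, s (v, x, y) = (n : ℝ)⁻¹ * ∑ t, probEq p (A t) x := fun x => by
    rw [Fintype.sum_prod_type, Finset.mul_sum]
    refine Finset.sum_congr rfl fun t _ => ?_
    simp_rw [m2]
    rw [← Finset.mul_sum, ← pe_pair_sum p (A t) (U t) x]
    congr 1
    refine Finset.sum_congr rfl fun v _ => pe_congr p fun ω => ?_
    simp only [Prod.mk.injEq]; tauto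
  have m5 : ∀ t v, ∑ y, ∑ x, s ((t, v), x, y) = (n : ℝ)⁻¹ * probEq p (U t) v := fun t v => by
    rw [Finset.sum_comm, m1]
  have sp : IsPMF s := by
    refine ⟨fun z => mul_nonneg (by positivity) (pe_nonneg hp.1 _ _), ?_⟩
    rw [Fintype.sum_prod_type, Fintype.sum_prod_type]
    simp_rw [Fintype.sum_prod_type (f := fun z : X × Y => s (_, z)), m1, ← Finset.mul_sum]
    simp_rw [pe_sum, hp.2]
    simp [hn'.ne']
  have red : ∀ (a b c : ℝ), (n : ℝ)⁻¹ * a / ((n : ℝ)⁻¹ * b * c) = a / (b * c) := fun a b c => by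
    rw [mul_assoc, mul_div_mul_left _ _ hni]
  have key := H (Fin n × V) s sp ?_ ?_ ?_ ?_
  · have e : Iof (fun v y => ∑ x, s (v, x, y)) PY = (n : ℝ)⁻¹ *
      ∑ t, ∑ ω, p ω * Real.log (probEq p (fun ω => (U t ω, B t ω)) (U t ω, B t ω) /
        (probEq p (U t) (U t ω) * PY (B t ω))) := by
      unfold Iof
      rw [Fintype.sum_prod_type, Finset.mul_sum]
      refine Finset.sum_congr rfl fun t _ => ?_
      rw [pe_expect p (fun ω => (U t ω, B t ω)) (fun z => Real.log
        (probEq p (fun ω => (U t ω, B t ω)) z / (probEq p (U t) z.1 * PY z.2))),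
        Fintype.sum_prod_type, Finset.mul_sum]
      refine Finset.sum_congr rfl fun v _ => ?_
      rw [Finset.mul_sum]
      refine Finset.sum_congr rfl fun y _ => ?_
      rw [m5]
      simp only [m3]
      rw [red, mul_assoc]
    rw [e] at key
    rwa [inv_mul_le_iff₀ hn'] at key
  · rintro ⟨⟨t, v⟩, x, y⟩ hz
    have : 0 < probEq p (fun ω => (U t ω, A t ω, B t ω)) (v, x, y) :=
      (pos_iff_pos_of_mul_pos hz).mp (by positivity)
    obtain ⟨ω, h1, h2⟩ := pe_exists this hp.1
    simp only [Prod.mk.injEq] at h2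
    have := hpos t ω h1
    rwa [h2.2.1, h2.2.2] at this
  · have e : ∑ z, s z * Real.log (s z / ((∑ x, ∑ y, s (z.1, x, y)) * PXY z.2.1 z.2.2)) =
       (n : ℝ)⁻¹ * ∑ t, ∑ ω, p ω * Real.log
        (probEq p (fun ω => (U t ω, A t ω, B t ω)) (U t ω, A t ω, B t ω) /
        (probEq p (U t) (U t ω) * PXY (A t ω) (B t ω))) := by
      rw [Fintype.sum_prod_type, Fintype.sum_prod_type, Finset.mul_sum]
      refine Finset.sum_congr rfl fun t _ => ?_
      rw [pe_expect p (fun ω => (U t ω, A t ω, B t ω)) (fun z => Real.log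
        (probEq p (fun ω => (U t ω, A t ω, B t ω)) z / (probEq p (U t) z.1 * PXY z.2.1 z.2.2))),
        Fintype.sum_prod_type, Finset.mul_sum]
      refine Finset.sum_congr rfl fun v _ => ?_
      rw [Finset.mul_sum]
      refine Finset.sum_congr rfl fun z _ => ?_
      rw [m1]
      simp only [hs]
      rw [red, mul_assoc]
    rw [e, inv_mul_le_iff₀ hn']
    exact hb
  · have e : ∑ z, s z * Real.log (s z / ((∑ y, s (z.1, z.2.1, y)) * W z.2.1 z.2.2)) =
       (n : ℝ)⁻¹ * ∑ t, ∑ ω, p ω * Real.log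
        (probEq p (fun ω => (U t ω, A t ω, B t ω)) (U t ω, A t ω, B t ω) /
        (probEq p (fun ω => (U t ω, A t ω)) (U t ω, A t ω) * W (A t ω) (B t ω))) := by
      rw [Fintype.sum_prod_type, Fintype.sum_prod_type, Finset.mul_sum]
      refine Finset.sum_congr rfl fun t _ => ?_
      rw [pe_expect p (fun ω => (U t ω, A t ω, B t ω)) (fun z => Real.log
        (probEq p (fun ω => (U t ω, A t ω, B t ω)) z /
          (probEq p (fun ω => (U t ω, A t ω)) (z.1, z.2.1) * W z.2.1 z.2.2))),
        Fintype.sum_prod_type, Finset.mul_sum]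
      refine Finset.sum_congr rfl fun v _ => ?_
      rw [Finset.mul_sum]
      refine Finset.sum_congr rfl fun z _ => ?_
      rw [m2]
      simp only [hs]
      rw [red, mul_assoc]
    rw [e, inv_mul_le_iff₀ hn']
    exact hc
  · simp_rw [m4]
    exact hd

/-- The first `t` letters of a sequence. -/
def preG {S β : Type*} {n : ℕ} (f : S → β) (t : ℕ) (ω : Fin n → S) : Fin n → Option β :=
  fun i => if i.val < t then some (f (ω i)) else none

theorem preG_succ {S β : Type*} {n : ℕ} (f : S → β) (t : Fin n) (ω ω' : Fin n → S) :
    preG f (t.val + 1) ω = preG f (t.val + 1) ω' ↔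
      preG f t.val ω = preG f t.val ω' ∧ f (ω t) = f (ω' t) := by
  rw [funext_iff, funext_iff]
  simp only [preG]
  constructor
  · intro h
    refine ⟨fun i => ?_, ?_⟩
    · have := h i
      by_cases hi : i.val < t.val
      · simpa [hi, Nat.lt_succ_of_lt hi] using this
      · simp [hi]
    · simpa using h t
  · rintro ⟨h1, h2⟩ i
    rcases lt_trichotomy i.val t.val with hi | hi | hi
    · have := h1 i
      simpa [hi, Nat.lt_succ_of_lt hi] using this
    · have : i = t := Fin.ext hi
      subst this
      simp [h2]
    · have : ¬ i.val < t.val + 1 := by omega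
      simp [this]

theorem preG_zero {S β : Type*} {n : ℕ} (f : S → β) (ω ω' : Fin n → S) :
    preG f 0 ω = preG f 0 ω' := by
  funext i
  simp [preG]

theorem preG_full {S β : Type*} {n : ℕ} (f : S → β) (ω ω' : Fin n → S) :
    preG f n ω = preG f n ω' ↔ (fun i => f (ω i)) = fun i => f (ω' i) := by
  simp [preG, funext_iff]

theorem preG_update {S β : Type*} {n : ℕ} (f : S → β) (t : Fin n) (ω : Fin n → S) (s : S) :
    preG f t.val (Function.update ω t s) = preG f t.val ω := by
  funext i
  simp only [preG]
  split_ifs with h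
  · rw [Function.update_of_ne]
    rintro rfl
    exact lt_irrefl _ h
  · rfl

theorem tele (n : ℕ) (f : ℕ → ℝ) : ∑ t : Fin n, (f (t.val + 1) - f t.val) = f n - f 0 := by
  rw [Fin.sum_univ_eq_sum_range (fun t => f (t + 1) - f t), Finset.sum_range_sub]

theorem sum_log_prod {Ω : Type*} [Fintype Ω] {n : ℕ} {p : Ω → ℝ} (hp : ∀ ω, 0 ≤ p ω)
    (g : Fin n → Ω → ℝ) (hg : ∀ t ω, 0 < p ω → 0 < g t ω) :
    ∑ ω, p ω * Real.log (∏ t, g t ω) = ∑ t, ∑ ω, p ω * Real.log (g t ω) := by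
  rw [Finset.sum_comm]
  simp_rw [← Finset.mul_sum]
  refine sum_log_congr hp fun ω h => ?_
  rw [Real.log_prod]
  exact fun t _ => (hg t ω h).ne'

theorem sum_log_div {Ω : Type*} [Fintype Ω] {p : Ω → ℝ} (hp : ∀ ω, 0 ≤ p ω)
    (f g : Ω → ℝ) (hf : ∀ ω, 0 < p ω → 0 < f ω) (hg : ∀ ω, 0 < p ω → 0 < g ω) :
    ∑ ω, p ω * Real.log (f ω / g ω) =
      ∑ ω, p ω * Real.log (f ω) - ∑ ω, p ω * Real.log (g ω) := by
  rw [← Finset.sum_sub_distrib]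
  simp_rw [← mul_sub]
  exact sum_log_congr hp fun ω h => Real.log_div (hf ω h).ne' (hg ω h).ne'

theorem sum_log_mul {Ω : Type*} [Fintype Ω] {p : Ω → ℝ} (hp : ∀ ω, 0 ≤ p ω)
    (f g : Ω → ℝ) (hf : ∀ ω, 0 < p ω → 0 < f ω) (hg : ∀ ω, 0 < p ω → 0 < g ω) :
    ∑ ω, p ω * Real.log (f ω * g ω) =
      ∑ ω, p ω * Real.log (f ω) + ∑ ω, p ω * Real.log (g ω) := by
  rw [← Finset.sum_add_distrib]
  simp_rw [← mul_add]
  exact sum_log_congr hp fun ω h => Real.log_mul (hf ω h).ne' (hg ω h).ne'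

end Hop

section Hop2

theorem lq_fac {S C X Y : Type} [Fintype S] {W : X → Y → ℝ} {n : ℕ} {V : Type*}
    (P : S → ℝ) (hP : IsPMF P) (a' : C → X) (b : S → Y) (c : S → C)
    (hmk : ∀ (g : C → ℝ) y, probEq (fun s => P s * g (c s)) b y =
      ∑ s, P s * g (c s) * W (a' (c s)) y)
    {N : ℕ} (m : (Fin n → C) → Fin N) (f : S → V) (t : Fin n)
    (u : Fin N × (Fin n → Option V)) (x : X) (y : Y) :
    probEq (fun ω : Fin n → S => ∏ t, P (ω t))
      (fun ω => ((m (fun i => c (ω i)), preG f t.val ω), a' (c (ω t)), b (ω t))) (u, x, y) =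
    probEq (fun ω : Fin n → S => ∏ t, P (ω t))
      (fun ω => ((m (fun i => c (ω i)), preG f t.val ω), a' (c (ω t)))) (u, x) * W x y := by
  classical
  have ind : ∀ {β : Type _} (Z : (Fin n → S) → β) (z : β),
      probEq (fun ω : Fin n → S => ∏ t, P (ω t)) Z z =
      ∑ ω : Fin n → S, (∏ t, P (ω t)) * (if Z ω = z then 1 else 0) := by
    intro β Z z
    unfold probEq
    refine Finset.sum_congr rfl fun ω _ => ?_
    split_ifs <;> simp
  have ind' : ∀ {β : Type _} (Z : (Fin n → S) → β) (z : β),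
      probEq (fun ω : Fin n → S => ∏ t, P (ω t)) Z z =
      ∑ ω : Fin n → S, (∏ t, P (ω t)) * (if Z ω = z then 1 else 0) := by
    intro β Z z
    unfold probEq
    refine Finset.sum_congr rfl fun ω _ => ?_
    split_ifs <;> simp
  rw [ind, ind']
  refine (resample (A := fun _ : Fin n => S) (fun _ => P) t hP.2 _).trans ?_
  refine Eq.trans ?_ (congrArg (· * W x y)
    (resample (A := fun _ : Fin n => S) (fun _ => P) t hP.2 _).symm)
  rw [Finset.sum_mul]
  refine Finset.sum_congr rfl fun ω _ => ?_
  rw [mul_assoc]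
  congr 1
  have hc : ∀ s, (fun i => c (Function.update ω t s i)) =
      Function.update (fun i => c (ω i)) t (c s) := fun s => by
    funext i
    by_cases hi : i = t
    · subst hi; simp
    · simp [hi]
  let g : C → ℝ := fun γ => if m (Function.update (fun i => c (ω i)) t γ) = u.1 ∧
    preG f t.val ω = u.2 ∧ a' γ = x then 1 else 0
  have h := hmk g y
  have e1 : ∑ s, P s * (if ((m (fun i => c (Function.update ω t s i)),
        preG f t.val (Function.update ω t s)), a' (c (Function.update ω t s t)),
        b (Function.update ω t s t)) = (u, x, y) then (1 : ℝ) else 0) =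
      probEq (fun s => P s * g (c s)) b y := by
    unfold probEq
    refine Finset.sum_congr rfl fun s _ => ?_
    rw [hc, preG_update]
    simp only [Function.update_self, g, Prod.ext_iff]
    by_cases h1 : b s = y <;>
    by_cases h2 : m (Function.update (fun i => c (ω i)) t (c s)) = u.1 <;>
    by_cases h3 : preG f t.val ω = u.2 <;> by_cases h4 : a' (c s) = x <;> simp [h1, h2, h3, h4]
  refine Eq.trans (b := probEq (fun s => P s * g (c s)) b y) (by rw [← e1]; congr!) ?_
  rw [h, Finset.sum_mul]
  refine Finset.sum_congr rfl fun s _ => ?_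
  rw [hc, preG_update]
  simp only [Function.update_self, g, Prod.ext_iff]
  by_cases h2 : m (Function.update (fun i => c (ω i)) t (c s)) = u.1 <;>
    by_cases h3 : preG f t.val ω = u.2 <;> by_cases h4 : a' (c s) = x <;> simp [h2, h3, h4]

variable {X Y : Type} [Fintype X] [Fintype Y] {PXY : X → Y → ℝ} {PX : X → ℝ}
    {PY : Y → ℝ} {W : X → Y → ℝ}

theorem Src.hop (h : Src PXY PX PY W) {R : ℝ} (hR : 0 ≤ R) {ε : ℝ} (hε : 0 < ε) :
    ∃ δ : ℝ, 0 < δ ∧ ∀ (S C : Type) [Fintype S] (P : S → ℝ) (_ : IsPMF P)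
      (a' : C → X) (b : S → Y) (c : S → C)
      (_ : ∀ x y, probEq P (fun s => (a' (c s), b s)) (x, y) = PXY x y)
      (_ : ∀ (g : C → ℝ) y, probEq (fun s => P s * g (c s)) b y =
        ∑ s, P s * g (c s) * W (a' (c s)) y)
      (n : ℕ) (_ : 0 < n) (p : (Fin n → S) → ℝ) (_ : IsPMF p) (B : ℝ)
      (_ : B ≤ n * δ) (_ : ∀ ω, p ω ≤ Real.exp B * ∏ t, P (ω t))
      (N : ℕ) (m : (Fin n → C) → Fin N) (_ : Real.log N ≤ n * (R * Real.log 2)),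
      ∑ ω, p ω * Real.log (probEq p (fun ω => ((fun i => b (ω i)), m (fun i => c (ω i))))
          ((fun i => b (ω i)), m (fun i => c (ω i))) /
        ((∏ t, PY (b (ω t))) * probEq p (fun ω => m (fun i => c (ω i))) (m (fun i => c (ω i)))))
        ≤ n * (Real.log 2 * sSup (ES PXY R) + ε) := by
  obtain ⟨δ, hδ, H⟩ := h.mix hR hε
  refine ⟨δ, hδ, ?_⟩
  intro S C _ P hP a' b c hab hmk n hn p hp B hB hpq N m hN
  have hn' : (0 : ℝ) < n := Nat.cast_pos.mpr hn
  set q : (Fin n → S) → ℝ := fun ω => ∏ t, P (ω t) with hq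
  have hqp : IsPMF q := iid_pmf hP
  obtain ⟨f, hf⟩ : ∃ f : S → X × Y, f = fun s => (a' (c s), b s) := ⟨_, rfl⟩
  set M : (Fin n → S) → Fin N := fun ω => m (fun i => c (ω i)) with hM
  set U : ℕ → (Fin n → S) → Fin N × (Fin n → Option (X × Y)) :=
    fun t ω => (M ω, preG f t ω) with hU
  set Vv : ℕ → (Fin n → S) → Fin N × (Fin n → Option Y) :=
    fun t ω => (M ω, preG b t ω) with hVv
  have pq : ∀ ω, 0 < p ω → 0 < q ω := fun ω hω => by
    have := hω.trans_le (hpq ω)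
    exact (pos_iff_pos_of_mul_pos this).mp (Real.exp_pos _)
  have Ppos : ∀ t ω, 0 < p ω → 0 < P (ω t) := fun t ω hω => by
    refine (hP.1 _).lt_of_ne fun h0 => (pq ω hω).ne' ?_
    exact Finset.prod_eq_zero (Finset.mem_univ t) h0.symm
  have hXYpos : ∀ t ω, 0 < p ω → 0 < PXY (a' (c (ω t))) (b (ω t)) := fun t ω hω => by
    rw [← hab]
    exact pe_pos hP.1 (fun s => (a' (c s), b s)) (Ppos t ω hω)
  have hXpos : ∀ t ω, 0 < p ω → 0 < PX (a' (c (ω t))) := fun t ω hω => by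
    have := hXYpos t ω hω
    rw [h.fac] at this
    exact (h.px0 _).lt_of_ne fun h0 => by rw [← h0] at this; simp at this
  have hWpos : ∀ t ω, 0 < p ω → 0 < W (a' (c (ω t))) (b (ω t)) := fun t ω hω => by
    have := hXYpos t ω hω
    rw [h.fac] at this
    exact (h.w0 _ _).lt_of_ne fun h0 => by rw [← h0] at this; simp at this
  have hPa : ∀ x, probEq P (fun s => a' (c s)) x = PX x := fun x => by
    rw [← pe_pair_sum P (fun s => a' (c s)) b]
    simp_rw [hab, h.fac]
    rw [← Finset.mul_sum, h.w1, mul_one]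
  have hPb : ∀ y, probEq P b y = PY y := fun y => by
    rw [← pe_pair_sum P b (fun s => a' (c s)), h.py]
    refine Finset.sum_congr rfl fun x _ => ?_
    rw [← hab]
    refine pe_congr P fun s => ?_
    simp only [Prod.mk.injEq]; tauto
  have hYpos : ∀ t ω, 0 < p ω → 0 < PY (b (ω t)) := fun t ω hω => by
    rw [← hPb]
    exact pe_pos hP.1 b (Ppos t ω hω)
  -- one-step identities
  have Usucc : ∀ (r : (Fin n → S) → ℝ) (t : Fin n) ω, probEq r (U (t.val + 1)) (U (t.val + 1) ω) =
      probEq r (fun ω => (U t.val ω, a' (c (ω t)), b (ω t))) (U t.val ω, a' (c (ω t)), b (ω t)) := by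
    intro r t ω
    refine pe_congr r fun ω' => ?_
    simp only [hU, Prod.mk.injEq, preG_succ, hf]
    tauto
  have Vsucc : ∀ (r : (Fin n → S) → ℝ) (t : Fin n) ω,
      probEq r (Vv (t.val + 1)) (Vv (t.val + 1) ω) =
      probEq r (fun ω => (Vv t.val ω, b (ω t))) (Vv t.val ω, b (ω t)) := by
    intro r t ω
    refine pe_congr r fun ω' => ?_
    simp only [hVv, Prod.mk.injEq, preG_succ]
    tauto
  have U0 : ∀ (r : (Fin n → S) → ℝ) ω, probEq r (U 0) (U 0 ω) = probEq r M (M ω) := by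
    intro r ω
    refine pe_congr r fun ω' => ?_
    simp only [hU, Prod.mk.injEq, preG_zero f ω' ω, and_true]
  have V0 : ∀ (r : (Fin n → S) → ℝ) ω, probEq r (Vv 0) (Vv 0 ω) = probEq r M (M ω) := by
    intro r ω
    refine pe_congr r fun ω' => ?_
    simp only [hVv, Prod.mk.injEq, preG_zero b ω' ω, and_true]
  have Vn : ∀ (r : (Fin n → S) → ℝ) ω, probEq r (Vv n) (Vv n ω) =
      probEq r (fun ω => ((fun i => b (ω i)), M ω)) ((fun i => b (ω i)), M ω) := by
    intro r ω
    refine pe_congr r fun ω' => ?_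
    simp only [hVv, Prod.mk.injEq, preG_full]
    tauto
  set F : ℕ → ℝ := fun t => ∑ ω, p ω * Real.log (probEq p (U t) (U t ω)) with hF
  set G : ℕ → ℝ := fun t => ∑ ω, p ω * Real.log (probEq q (U t) (U t ω)) with hG
  have hUp : ∀ t ω, 0 < p ω → 0 < probEq p (U t) (U t ω) := fun t ω hω => pe_pos hp.1 (U t) hω
  have hUq : ∀ t ω, 0 < p ω → 0 < probEq q (U t) (U t ω) := fun t ω hω =>
    pe_pos hqp.1 (U t) (pq ω hω)
  have hE : ∀ k : ℝ, ∑ ω, p ω * k = k := fun k => by rw [← Finset.sum_mul, hp.2, one_mul]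
  -- (b)
  have hb : ∑ t : Fin n, ∑ ω, p ω * Real.log (probEq p
        (fun ω => (U t.val ω, a' (c (ω t)), b (ω t))) (U t.val ω, a' (c (ω t)), b (ω t)) /
        (probEq p (U t.val) (U t.val ω) * PXY (a' (c (ω t))) (b (ω t)))) ≤
      n * (R * Real.log 2 + δ) := by
    have e : ∀ t : Fin n, ∑ ω, p ω * Real.log (probEq p
        (fun ω => (U t.val ω, a' (c (ω t)), b (ω t))) (U t.val ω, a' (c (ω t)), b (ω t)) /
        (probEq p (U t.val) (U t.val ω) * PXY (a' (c (ω t))) (b (ω t)))) =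
        (F (t.val + 1) - F t.val) - ∑ ω, p ω * Real.log (PXY (a' (c (ω t))) (b (ω t))) := by
      intro t
      simp_rw [← Usucc]
      rw [sum_log_div hp.1 _ _ (hUp _) (fun ω hω => mul_pos (hUp _ ω hω) (hXYpos t ω hω)),
        sum_log_mul hp.1 _ _ (hUp _) (hXYpos t)]
      simp only [hF]; ring
    rw [Finset.sum_congr rfl fun t _ => e t, Finset.sum_sub_distrib, tele,
      ← sum_log_prod hp.1 _ hXYpos]
    have b1 : F n ≤ B + ∑ ω, p ω * Real.log (∏ t, PXY (a' (c (ω t))) (b (ω t))) := by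
      rw [← hE B, ← Finset.sum_add_distrib]
      simp_rw [← mul_add]
      refine sum_log_mono hp.1 fun ω hω => ?_
      have hpr : 0 < ∏ t, PXY (a' (c (ω t))) (b (ω t)) :=
        Finset.prod_pos fun t _ => hXYpos t ω hω
      rw [← Real.log_exp B, ← Real.log_mul (Real.exp_pos _).ne' hpr.ne']
      refine Real.log_le_log (hUp n ω hω) ?_
      refine (pe_mono hpq (U n) (U n ω)).trans ?_
      refine mul_le_mul_of_nonneg_left ?_ (Real.exp_pos _).le
      simp_rw [← hab]
      rw [← pe_iid P (fun s => (a' (c s), b s)) (fun t => (a' (c (ω t)), b (ω t)))]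
      refine pe_le_of_imp hqp.1 fun ω' hω' => ?_
      simp only [hU, Prod.mk.injEq, preG_full, hf] at hω'
      exact hω'.2
    have hNpos : 0 < N := (m (fun i => c ((Classical.choice (by
        by_contra hne
        rw [not_nonempty_iff] at hne
        have := hp.2
        simp at this) : Fin n → S) i))).pos
    have b2 : -Real.log N ≤ F 0 := by
      have := gibbs hp M (fun _ => (N : ℝ)⁻¹) (fun _ => by positivity) (by
        simp [hNpos.ne']) (fun _ _ => by positivity)
      rw [hE, Real.log_inv] at this
      simp only [hF, U0]
      exact this
    nlinarith
  -- (c)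
  have hc : ∑ t : Fin n, ∑ ω, p ω * Real.log (probEq p
        (fun ω => (U t.val ω, a' (c (ω t)), b (ω t))) (U t.val ω, a' (c (ω t)), b (ω t)) /
        (probEq p (fun ω => (U t.val ω, a' (c (ω t)))) (U t.val ω, a' (c (ω t))) *
          W (a' (c (ω t))) (b (ω t)))) ≤ n * δ := by
    have e : ∀ t : Fin n, ∑ ω, p ω * Real.log (probEq p
        (fun ω => (U t.val ω, a' (c (ω t)), b (ω t))) (U t.val ω, a' (c (ω t)), b (ω t)) /
        (probEq p (fun ω => (U t.val ω, a' (c (ω t)))) (U t.val ω, a' (c (ω t))) *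
          W (a' (c (ω t))) (b (ω t)))) ≤
        (fun t => F t - G t) (t.val + 1) - (fun t => F t - G t) t.val := by
      intro t
      have hp2 : ∀ ω, 0 < p ω → 0 < probEq p (fun ω => (U t.val ω, a' (c (ω t))))
        (U t.val ω, a' (c (ω t))) := fun ω hω => pe_pos hp.1 (fun ω => (U t.val ω, a' (c (ω t)))) hω
      have hq2 : ∀ ω, 0 < p ω → 0 < probEq q (fun ω => (U t.val ω, a' (c (ω t))))
        (U t.val ω, a' (c (ω t))) := fun ω hω =>
          pe_pos hqp.1 (fun ω => (U t.val ω, a' (c (ω t)))) (pq ω hω)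
      have c1 := cond_gibbs hp (U t.val) (fun ω => a' (c (ω t)))
        (fun u x => probEq q (fun ω => (U t.val ω, a' (c (ω t)))) (u, x) / probEq q (U t.val) u)
        (fun u x => div_nonneg (pe_nonneg hqp.1 _ _) (pe_nonneg hqp.1 _ _))
        (fun u => by
          rw [← Finset.sum_div, pe_pair_sum q (U t.val)]
          exact div_self_le_one _)
        (fun ω hω => div_pos (hq2 ω hω) (hUq _ ω hω))
      rw [sum_log_div hp.1 _ _ hq2 (hUq _), sum_log_div hp.1 _ _ hp2 (hUp _)] at c1
      have c2 : G (t.val + 1) = ∑ ω, p ω * Real.log (probEq q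
          (fun ω => (U t.val ω, a' (c (ω t)))) (U t.val ω, a' (c (ω t)))) +
          ∑ ω, p ω * Real.log (W (a' (c (ω t))) (b (ω t))) := by
        rw [← sum_log_mul hp.1 _ _ hq2 (hWpos t)]
        simp only [hG]
        refine Finset.sum_congr rfl fun ω _ => ?_
        rw [Usucc]
        congr 2
        exact lq_fac P hP a' b c hmk m f t (U t.val ω) _ _
      simp_rw [← Usucc]
      rw [sum_log_div hp.1 _ _ (hUp _) (fun ω hω => mul_pos (hp2 ω hω) (hWpos t ω hω)),
        sum_log_mul hp.1 _ _ hp2 (hWpos t)]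
      simp only [hF, hG] at c2 c1 ⊢
      linarith
    refine (Finset.sum_le_sum fun t _ => e t).trans ?_
    refine (tele n (fun t => F t - G t)).le.trans ?_
    have c3 : F n - G n ≤ B := by
      simp only [hF, hG]
      rw [← sum_log_div hp.1 _ _ (hUp _) (hUq _), ← hE B]
      refine sum_log_mono hp.1 fun ω hω => ?_
      rw [Real.log_le_iff_le_exp (div_pos (hUp _ ω hω) (hUq _ ω hω)), div_le_iff₀ (hUq _ ω hω)]
      exact pe_mono hpq _ _
    have c4 : 0 ≤ F 0 - G 0 := by
      simp only [hF, hG]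
      rw [← sum_log_div hp.1 _ _ (hUp _) (hUq _)]
      exact kl_nonneg hp hqp pq (U 0)
    linarith
  -- (d)
  have hd : ∑ x, ((n : ℝ)⁻¹ * ∑ t : Fin n, probEq p (fun ω => a' (c (ω t))) x) *
        Real.log (((n : ℝ)⁻¹ * ∑ t : Fin n, probEq p (fun ω => a' (c (ω t))) x) / PX x) ≤ δ := by
    set σ : X → ℝ := fun x => (n : ℝ)⁻¹ * ∑ t : Fin n, probEq p (fun ω => a' (c (ω t))) x with hσ
    have σ0 : ∀ x, 0 ≤ σ x := fun x => mul_nonneg (by positivity)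
      (Finset.sum_nonneg fun t _ => pe_nonneg hp.1 _ _)
    have σ1 : ∑ x, σ x = 1 := by
      simp only [hσ]
      rw [← Finset.mul_sum, Finset.sum_comm]
      simp_rw [pe_sum, hp.2]
      simp [hn'.ne']
    have σpos : ∀ t ω, 0 < p ω → 0 < σ (a' (c (ω t))) := fun t ω hω => by
      refine mul_pos (by positivity) ?_
      exact (pe_pos hp.1 (fun ω => a' (c (ω t))) hω).trans_le
        (Finset.single_le_sum (f := fun t' : Fin n => probEq p (fun ω => a' (c (ω t')))
          (a' (c (ω t)))) (fun _ _ => pe_nonneg hp.1 _ _) (Finset.mem_univ t))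
    have d1 := gibbs hp (fun ω t => a' (c (ω t))) (fun v : Fin n → X => ∏ t, σ (v t))
      (fun v => Finset.prod_nonneg fun t _ => σ0 _) (iid_pmf (P := σ) ⟨σ0, σ1⟩).2.le
      (fun ω hω => Finset.prod_pos fun t _ => σpos t ω hω)
    have d2 : ∑ ω, p ω * Real.log (probEq p (fun ω t => a' (c (ω t))) (fun t => a' (c (ω t)))) ≤
        B + ∑ ω, p ω * Real.log (∏ t, PX (a' (c (ω t)))) := by
      rw [← hE B, ← Finset.sum_add_distrib]
      simp_rw [← mul_add]
      refine sum_log_mono hp.1 fun ω hω => ?_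
      have hpr : 0 < ∏ t, PX (a' (c (ω t))) := Finset.prod_pos fun t _ => hXpos t ω hω
      rw [← Real.log_exp B, ← Real.log_mul (Real.exp_pos _).ne' hpr.ne']
      refine Real.log_le_log (pe_pos hp.1 (fun ω t => a' (c (ω t))) hω) ?_
      refine (pe_mono hpq _ _).trans ?_
      refine mul_le_mul_of_nonneg_left ?_ (Real.exp_pos _).le
      rw [pe_iid P (fun s => a' (c s))]
      simp_rw [hPa]
      exact le_rfl
    rw [sum_log_prod hp.1 _ σpos] at d1
    rw [sum_log_prod hp.1 _ hXpos] at d2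
    have d3 : ∑ x, σ x * Real.log (σ x / PX x) = (n : ℝ)⁻¹ *
        (∑ t : Fin n, ∑ ω, p ω * Real.log (σ (a' (c (ω t)))) -
          ∑ t : Fin n, ∑ ω, p ω * Real.log (PX (a' (c (ω t))))) := by
      rw [← Finset.sum_sub_distrib]
      have : ∀ t : Fin n, ∑ ω, p ω * Real.log (σ (a' (c (ω t)))) -
          ∑ ω, p ω * Real.log (PX (a' (c (ω t)))) =
          ∑ x, probEq p (fun ω => a' (c (ω t))) x * Real.log (σ x / PX x) := by
        intro t
        rw [← sum_log_div hp.1 _ _ (σpos t) (hXpos t),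
          ← pe_expect p (fun ω => a' (c (ω t))) (fun x => Real.log (σ x / PX x))]
      simp_rw [this]
      rw [Finset.sum_comm, Finset.mul_sum]
      refine Finset.sum_congr rfl fun x _ => ?_
      rw [← Finset.sum_mul, ← mul_assoc]
    rw [d3, inv_mul_le_iff₀ hn']
    linarith
  have key := H (Fin n → S) _ p hp n hn (fun t => U t.val) (fun t ω => a' (c (ω t)))
    (fun t ω => b (ω t)) hXYpos hb hc hd
  refine le_trans ?_ key
  have hVp : ∀ t ω, 0 < p ω → 0 < probEq p (Vv t) (Vv t ω) := fun t ω hω => pe_pos hp.1 (Vv t) hω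
  set Q : ℕ → ℝ := fun t => ∑ ω, p ω * Real.log (probEq p (Vv t) (Vv t ω)) with hQ
  have hprY : ∀ ω, 0 < p ω → 0 < ∏ t, PY (b (ω t)) := fun ω hω =>
    Finset.prod_pos fun t _ => hYpos t ω hω
  have hMp : ∀ ω, 0 < p ω → 0 < probEq p M (M ω) := fun ω hω => pe_pos hp.1 M hω
  have a1 : ∑ ω, p ω * Real.log (probEq p (fun ω => ((fun i => b (ω i)), M ω))
      ((fun i => b (ω i)), M ω) / ((∏ t, PY (b (ω t))) * probEq p M (M ω))) =
      ∑ t : Fin n, ((Q (t.val + 1) - Q t.val) - ∑ ω, p ω * Real.log (PY (b (ω t)))) := by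
    simp_rw [← Vn]
    rw [sum_log_div hp.1 _ _ (hVp _) (fun ω hω => mul_pos (hprY ω hω) (hMp ω hω)),
      sum_log_mul hp.1 _ _ hprY hMp, Finset.sum_sub_distrib, tele, sum_log_prod hp.1 _ hYpos]
    simp only [hQ, V0]
    ring
  refine a1.le.trans (Finset.sum_le_sum fun t _ => ?_)
  have hUYp : ∀ ω, 0 < p ω → 0 < probEq p (fun ω => (U t.val ω, b (ω t))) (U t.val ω, b (ω t)) :=
    fun ω hω => pe_pos hp.1 (fun ω => (U t.val ω, b (ω t))) hω
  have hVYp : ∀ ω, 0 < p ω → 0 < probEq p (fun ω => (Vv t.val ω, b (ω t))) (Vv t.val ω, b (ω t)) :=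
    fun ω hω => pe_pos hp.1 (fun ω => (Vv t.val ω, b (ω t))) hω
  rw [sum_log_div hp.1 _ _ hUYp (fun ω hω => mul_pos (hUp _ ω hω) (hYpos t ω hω)),
      sum_log_mul hp.1 _ _ (hUp _) (hYpos t)]
  have r := cond_refine hp (U t.val) (fun ω => b (ω t))
    (fun u : Fin N × (Fin n → Option (X × Y)) => (u.1, fun i => (u.2 i).map Prod.snd))
  have hVU : ∀ ω, ((U t.val ω).1, fun i => ((U t.val ω).2 i).map Prod.snd) = Vv t.val ω := by
    intro ω
    simp only [hU, hVv, Prod.mk.injEq, true_and]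
    funext i
    simp only [preG, hf]
    split_ifs <;> rfl
  simp_rw [hVU] at r
  have eV : (fun ω => Vv t.val ω) = Vv t.val := rfl
  rw [eV, sum_log_div hp.1 _ _ hVYp (hVp _), sum_log_div hp.1 _ _ hUYp (hUp _)] at r
  simp only [hQ, Vsucc]
  linarith

end Hop2

section Markov

set_option linter.unusedSectionVars false

theorem swap_coord {ι : Type*} [Fintype ι] [DecidableEq ι] {A : ι → Type*} [∀ i, Fintype (A i)]
    [∀ i, Nonempty (A i)] (j : ι) (G1 G2 : (∀ i, A i) → ℝ)
    (h : ∀ s, ∑ v, G1 (Function.update s j v) = ∑ v, G2 (Function.update s j v)) :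
    ∑ s, G1 s = ∑ s, G2 s := by
  have hc : ∀ i, (Fintype.card (A i) : ℝ) ≠ 0 := fun i => by
    exact_mod_cast Fintype.card_ne_zero
  have r : ∀ G : (∀ i, A i) → ℝ, (∏ i, (Fintype.card (A i) : ℝ)⁻¹) * ∑ s, G s =
      ∑ s, (∏ i, (Fintype.card (A i) : ℝ)⁻¹) *
        ((Fintype.card (A j) : ℝ)⁻¹ * ∑ v, G (Function.update s j v)) := fun G => by
    have := resample (fun i (_ : A i) => (Fintype.card (A i) : ℝ)⁻¹) j (by simp [hc j]) G
    rw [Finset.mul_sum, this]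
    simp_rw [Finset.mul_sum]
  have : (∏ i, (Fintype.card (A i) : ℝ)⁻¹) * ∑ s, G1 s =
      (∏ i, (Fintype.card (A i) : ℝ)⁻¹) * ∑ s, G2 s := by
    rw [r, r]
    simp_rw [h]
  exact mul_left_cancel₀ (Finset.prod_ne_zero_iff.mpr fun i _ => inv_ne_zero (hc i)) this

variable (K : ℕ) (Y : ℕ → Type) [∀ i, Fintype (Y i)] [∀ i, Nonempty (Y i)]
variable (P : (∀ i : Fin (K + 1), Y i) → ℝ)

theorem margK_eq (i : Fin (K + 1)) (c : Y i) : margK K Y P i c = probEq P (fun y => y i) c := rfl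

/-- Coordinate `j`. -/
def gLo (j : Fin K) (y : ∀ i : Fin (K + 1), Y i) : Y (j : ℕ) := y (idxLo K j)

/-- Coordinate `j + 1`. -/
def gHi (j : Fin K) (y : ∀ i : Fin (K + 1), Y i) : Y ((j : ℕ) + 1) := y (idxHi K j)

/-- Replace coordinate `j + 1`. -/
def updHi (j : Fin K) (y : ∀ i : Fin (K + 1), Y i) (v : Y ((j : ℕ) + 1)) :
    ∀ i : Fin (K + 1), Y i := Function.update (β := fun i : Fin (K + 1) => Y i) y (idxHi K j) v

/-- Marginal of coordinate `j`. -/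
def mLo (j : Fin K) (a : Y (j : ℕ)) : ℝ := margK K Y P (idxLo K j) a

/-- Marginal of coordinate `j + 1`. -/
def mHi (j : Fin K) (a : Y ((j : ℕ) + 1)) : ℝ := margK K Y P (idxHi K j) a

theorem mLo_eq (j : Fin K) (a : Y (j : ℕ)) : mLo K Y P j a = probEq P (gLo K Y j) a := rfl

theorem mHi_eq (j : Fin K) (a : Y ((j : ℕ) + 1)) : mHi K Y P j a = probEq P (gHi K Y j) a := rfl

theorem pairMargK_eq (j : Fin K) (a : Y (j : ℕ)) (b : Y ((j : ℕ) + 1)) :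
    pairMargK K Y P j a b = probEq P (fun y => (gLo K Y j y, gHi K Y j y)) (a, b) := by
  classical
  unfold pairMargK probEq
  refine Finset.sum_congr rfl fun y _ => ?_
  have : ((gLo K Y j y, gHi K Y j y) = (a, b)) ↔ (y (idxLo K j) = a ∧ y (idxHi K j) = b) :=
    Prod.mk.injEq _ _ _ _ ▸ Iff.rfl
  simp only [this]

theorem gHi_updHi (j : Fin K) (y : ∀ i : Fin (K + 1), Y i) (v : Y ((j : ℕ) + 1)) :
    gHi K Y j (updHi K Y j y v) = v :=
  Function.update_self (β := fun i : Fin (K + 1) => Y i) (idxHi K j) v y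

theorem updHi_ne (j : Fin K) (y : ∀ i : Fin (K + 1), Y i) (v : Y ((j : ℕ) + 1)) (i : Fin (K + 1))
    (h : i.val ≠ j.val + 1) : updHi K Y j y v i = y i :=
  Function.update_of_ne (β := fun i : Fin (K + 1) => Y i) (a' := idxHi K j)
    (fun h' => h (congrArg Fin.val h')) v y

theorem gHi_updHi_ne (l j : Fin K) (y : ∀ i : Fin (K + 1), Y i) (v : Y ((j : ℕ) + 1))
    (h : l.val ≠ j.val) : gHi K Y l (updHi K Y j y v) = gHi K Y l y :=
  updHi_ne K Y j y v _ (by simp only [idxHi]; omega)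

theorem gLo_updHi_ne (l j : Fin K) (y : ∀ i : Fin (K + 1), Y i) (v : Y ((j : ℕ) + 1))
    (h : l.val ≠ j.val + 1) : gLo K Y l (updHi K Y j y v) = gLo K Y l y :=
  updHi_ne K Y j y v _ (by simp only [idxLo]; omega)

theorem swapHi (j : Fin K) (G1 G2 : (∀ i : Fin (K + 1), Y i) → ℝ)
    (h : ∀ s, ∑ v, G1 (updHi K Y j s v) = ∑ v, G2 (updHi K Y j s v)) :
    ∑ s, G1 s = ∑ s, G2 s :=
  swap_coord (A := fun i : Fin (K + 1) => Y i) (idxHi K j) G1 G2 h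

open Classical in
/-- Transition kernel of hop `j`. -/
def WK (j : Fin K) (a : Y (j : ℕ)) (b : Y ((j : ℕ) + 1)) : ℝ :=
  if mLo K Y P j a = 0 then mHi K Y P j b
  else pairMargK K Y P j a b / mLo K Y P j a

variable {K Y P}

theorem pair_le_lo (hP : IsPMF P) (j : Fin K) (a : Y (j : ℕ)) (b : Y ((j : ℕ) + 1)) :
    pairMargK K Y P j a b ≤ mLo K Y P j a := by
  rw [pairMargK_eq, mLo_eq]
  exact pe_le_of_imp hP.1 fun ω h => (Prod.mk.inj h).1

theorem pair_le_hi (hP : IsPMF P) (j : Fin K) (a : Y (j : ℕ)) (b : Y ((j : ℕ) + 1)) :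
    pairMargK K Y P j a b ≤ mHi K Y P j b := by
  rw [pairMargK_eq, mHi_eq]
  exact pe_le_of_imp hP.1 fun ω h => (Prod.mk.inj h).2

theorem pair_nonneg (hP : IsPMF P) (j : Fin K) (a : Y (j : ℕ)) (b : Y ((j : ℕ) + 1)) :
    0 ≤ pairMargK K Y P j a b := by
  rw [pairMargK_eq]; exact pe_nonneg hP.1 _ _

theorem marg_nonneg (hP : IsPMF P) (i : Fin (K + 1)) (a : Y i) : 0 ≤ margK K Y P i a := by
  rw [margK_eq]; exact pe_nonneg hP.1 _ _

theorem marg_sum (hP : IsPMF P) (i : Fin (K + 1)) : ∑ a, margK K Y P i a = 1 := by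
  simp_rw [margK_eq]; rw [pe_sum, hP.2]

theorem mHi_sum (hP : IsPMF P) (j : Fin K) : ∑ a, mHi K Y P j a = 1 := marg_sum hP (idxHi K j)

theorem srcK (hP : IsPMF P) (j : Fin K) :
    Src (pairMargK K Y P j) (mLo K Y P j) (mHi K Y P j) (WK K Y P j) where
  px0 := marg_nonneg hP (idxLo K j)
  px1 := marg_sum hP (idxLo K j)
  w0 a b := by
    unfold WK
    split_ifs
    · exact marg_nonneg hP _ _
    · exact div_nonneg (pair_nonneg hP _ _ _) (marg_nonneg hP _ _)
  w1 a := by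
    unfold WK
    split_ifs with h
    · exact mHi_sum hP j
    · rw [← Finset.sum_div, div_eq_one_iff_eq h]
      simp_rw [pairMargK_eq]
      rw [pe_pair_sum P (gLo K Y j), mLo_eq]
  fac a b := by
    unfold WK
    split_ifs with h
    · rw [h, zero_mul]
      exact le_antisymm (h ▸ pair_le_lo hP j a b) (pair_nonneg hP _ _ _)
    · rw [mul_div_cancel₀ _ h]
  py b := by
    simp_rw [pairMargK_eq]
    rw [mHi_eq, ← pe_pair_sum P (gHi K Y j) (gLo K Y j)]
    refine Finset.sum_congr rfl fun a _ => pe_congr P fun y => ?_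
    simp only [Prod.mk.injEq]; tauto

theorem chain_fac (hP : IsPMF P) (hK : 0 < K) (hMC : IsMarkovChainK K Y P)
    (y : ∀ i : Fin (K + 1), Y i) :
    P y = margK K Y P 0 (y 0) * ∏ j : Fin K, WK K Y P j (gLo K Y j y) (gHi K Y j y) := by
  classical
  by_cases hz : ∃ i, margK K Y P i (y i) = 0
  · have hPy : P y = 0 := by
      obtain ⟨i, hi⟩ := hz
      refine le_antisymm ?_ (hP.1 y)
      rw [← hi, margK_eq]
      exact pe_self_le hP.1 (fun y => y i) y
    rw [hPy]
    by_contra hne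
    have hne := Ne.symm hne
    rw [mul_ne_zero_iff, Finset.prod_ne_zero_iff] at hne
    obtain ⟨h0, h1⟩ := hne
    have : ∀ k (hk : k < K + 1), margK K Y P ⟨k, hk⟩ (y ⟨k, hk⟩) ≠ 0 := by
      intro k
      induction k with
      | zero => intro _; exact h0
      | succ k ih =>
        intro hk h2
        have hk' : k < K := by omega
        refine h1 ⟨k, hk'⟩ (Finset.mem_univ _) ?_
        have h4 : mLo K Y P ⟨k, hk'⟩ (gLo K Y ⟨k, hk'⟩ y) ≠ 0 := ih (by omega)
        unfold WK
        rw [if_neg h4]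
        have := pair_le_hi hP ⟨k, hk'⟩ (gLo K Y ⟨k, hk'⟩ y) (gHi K Y ⟨k, hk'⟩ y)
        have h3 : mHi K Y P ⟨k, hk'⟩ (gHi K Y ⟨k, hk'⟩ y) = 0 := h2
        rw [le_antisymm (h3 ▸ this) (pair_nonneg hP _ _ _), zero_div]
    obtain ⟨i, hi⟩ := hz
    exact this i.val i.isLt hi
  · push Not at hz
    have h := hMC y
    have h' : ∏ j : Fin K, pairMargK K Y P j (y (idxLo K j)) (y (idxHi K j)) =
        ∏ j : Fin K, (mLo K Y P j (gLo K Y j y) * WK K Y P j (gLo K Y j y) (gHi K Y j y)) :=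
      Finset.prod_congr rfl fun j _ => (srcK hP j).fac _ _
    rw [h', Finset.prod_mul_distrib] at h
    have e : ∏ j : Fin K, mLo K Y P j (gLo K Y j y) =
        margK K Y P 0 (y 0) * ∏ i ∈ Finset.univ.filter
          (fun i : Fin (K + 1) => 0 < (i : ℕ) ∧ (i : ℕ) < K), margK K Y P i (y i) := by
      have e1 : ∏ j : Fin K, mLo K Y P j (gLo K Y j y) =
          ∏ i ∈ Finset.univ.filter (fun i : Fin (K + 1) => (i : ℕ) < K), margK K Y P i (y i) := by
        refine Finset.prod_bij (fun j _ => idxLo K j) ?_ ?_ ?_ ?_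
        · intro j _; simp [idxLo]
        · intro j _ j' _ hjj; simpa [idxLo, Fin.ext_iff] using hjj
        · intro i hi
          simp only [Finset.mem_filter, Finset.mem_univ, true_and] at hi
          exact ⟨⟨i, hi⟩, Finset.mem_univ _, rfl⟩
        · intro j _; rfl
      rw [e1]
      have e2 : Finset.univ.filter (fun i : Fin (K + 1) => (i : ℕ) < K) =
          insert 0 (Finset.univ.filter (fun i : Fin (K + 1) => 0 < (i : ℕ) ∧ (i : ℕ) < K)) := by
        ext i
        simp only [Finset.mem_filter, Finset.mem_univ, true_and, Finset.mem_insert, Fin.ext_iff,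
          Fin.val_zero]
        omega
      rw [e2, Finset.prod_insert (by simp)]
    rw [e] at h
    have hne : ∏ i ∈ Finset.univ.filter
          (fun i : Fin (K + 1) => 0 < (i : ℕ) ∧ (i : ℕ) < K), margK K Y P i (y i) ≠ 0 :=
      Finset.prod_ne_zero_iff.mpr fun i _ => hz i
    refine mul_right_cancel₀ hne ?_
    rw [h]; ring

variable (K Y P) in
/-- Chain with transitions at index `≥ k` replaced by independent ones. -/
def PK (k : ℕ) (s : ∀ i : Fin (K + 1), Y i) : ℝ :=
  margK K Y P 0 (s 0) * ∏ l : Fin K, if l.val < k then WK K Y P l (gLo K Y l s) (gHi K Y l s)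
    else mHi K Y P l (gHi K Y l s)

variable (K Y P) in
/-- The part of `PK` not involving coordinate `k+1`. -/
def restK (k : Fin K) (s : ∀ i : Fin (K + 1), Y i) : ℝ :=
  margK K Y P 0 (s 0) * ∏ l ∈ Finset.univ.erase k,
    if l.val < k.val then WK K Y P l (gLo K Y l s) (gHi K Y l s)
    else mHi K Y P l (gHi K Y l s)

theorem PK_succ (k : Fin K) (s : ∀ i : Fin (K + 1), Y i) :
    PK K Y P (k.val + 1) s = restK K Y P k s * WK K Y P k (gLo K Y k s) (gHi K Y k s) := by
  unfold PK restK
  rw [← Finset.mul_prod_erase _ _ (Finset.mem_univ k), if_pos (Nat.lt_succ_self _)]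
  have : ∀ l ∈ Finset.univ.erase k, (if l.val < k.val + 1 then
      WK K Y P l (gLo K Y l s) (gHi K Y l s) else mHi K Y P l (gHi K Y l s)) =
      if l.val < k.val then WK K Y P l (gLo K Y l s) (gHi K Y l s)
      else mHi K Y P l (gHi K Y l s) := fun l hl => by
    have hne : l.val ≠ k.val := fun h => (Finset.ne_of_mem_erase hl) (Fin.ext h)
    have : l.val < k.val + 1 ↔ l.val < k.val := by omega
    simp only [this]
  rw [Finset.prod_congr rfl this]
  ring

theorem PK_self (k : Fin K) (s : ∀ i : Fin (K + 1), Y i) :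
    PK K Y P k.val s = restK K Y P k s * mHi K Y P k (gHi K Y k s) := by
  unfold PK restK
  rw [← Finset.mul_prod_erase _ _ (Finset.mem_univ k), if_neg (lt_irrefl _)]
  ring

theorem restK_update (k : Fin K) (s : ∀ i : Fin (K + 1), Y i) (v : Y (k.val + 1)) :
    restK K Y P k (updHi K Y k s v) = restK K Y P k s := by
  unfold restK
  rw [updHi_ne K Y k s v 0 (by simp)]
  congr 1
  refine Finset.prod_congr rfl fun l hl => ?_
  have hne : l.val ≠ k.val := fun h => (Finset.ne_of_mem_erase hl) (Fin.ext h)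
  rw [gHi_updHi_ne K Y l k s v hne]
  split_ifs with h
  · rw [gLo_updHi_ne K Y l k s v (by omega)]
  · rfl

theorem PK_top (hP : IsPMF P) (hK : 0 < K) (hMC : IsMarkovChainK K Y P) : PK K Y P K = P := by
  funext s
  rw [chain_fac hP hK hMC s]
  unfold PK
  simp

theorem PK_sum (hP : IsPMF P) (hK : 0 < K) (hMC : IsMarkovChainK K Y P) (k : ℕ) (hk : k ≤ K)
    (F : (∀ i : Fin (K + 1), Y i) → ℝ)
    (hF : ∀ (s : ∀ i : Fin (K + 1), Y i) (i : Fin (K + 1)) (v : Y i), k < i.val →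
      F (Function.update s i v) = F s) :
    ∑ s, P s * F s = ∑ s, PK K Y P k s * F s := by
  induction hk using Nat.decreasingInduction with
  | self => rw [PK_top hP hK hMC]
  | of_succ k hk ih =>
    rw [ih (fun s i v hi => hF s i v (by omega))]
    refine swapHi K Y ⟨k, hk⟩ _ _ fun s => ?_
    have e1 := fun s' => PK_succ (P := P) ⟨k, hk⟩ s'
    have e2 := fun s' => PK_self (P := P) ⟨k, hk⟩ s'
    simp only at e1 e2
    have hF' : ∀ v, F (updHi K Y ⟨k, hk⟩ s v) = F s := fun v =>
      hF s (idxHi K ⟨k, hk⟩) v (by simp [idxHi])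
    have hl : ∀ v, gLo K Y ⟨k, hk⟩ (updHi K Y ⟨k, hk⟩ s v) = gLo K Y ⟨k, hk⟩ s := fun v =>
      gLo_updHi_ne K Y _ _ _ _ (by simp)
    simp_rw [e1, e2, restK_update, hF', gHi_updHi, hl]
    rw [← Finset.sum_mul, ← Finset.sum_mul, ← Finset.mul_sum, ← Finset.mul_sum]
    congr 2
    exact ((srcK hP ⟨k, hk⟩).w1 _).trans (mHi_sum hP ⟨k, hk⟩).symm

theorem markov_hyp (hP : IsPMF P) (hK : 0 < K) (hMC : IsMarkovChainK K Y P) (j : Fin K)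
    (F : (∀ i : Fin (K + 1), Y i) → ℝ)
    (hF : ∀ (s : ∀ i : Fin (K + 1), Y i) (i : Fin (K + 1)) (v : Y i), j.val < i.val →
      F (Function.update s i v) = F s) (y : Y ((j : ℕ) + 1)) :
    probEq (fun s => P s * F s) (gHi K Y j) y =
      ∑ s, P s * F s * WK K Y P j (gLo K Y j s) y := by
  classical
  have e1 : probEq (fun s => P s * F s) (gHi K Y j) y =
      ∑ s, P s * (F s * if gHi K Y j s = y then 1 else 0) := by
    unfold probEq
    refine Finset.sum_congr rfl fun s _ => ?_
    split_ifs <;> simp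
  rw [e1, PK_sum hP hK hMC (j.val + 1) (Nat.succ_le_of_lt j.isLt)]
  · simp_rw [mul_assoc]
    rw [PK_sum hP hK hMC j.val j.isLt.le]
    · refine swapHi K Y j _ _ fun s => ?_
      have hF' : ∀ v, F (updHi K Y j s v) = F s := fun v =>
        hF s (idxHi K j) v (by simp [idxHi])
      have hl : ∀ v, gLo K Y j (updHi K Y j s v) = gLo K Y j s := fun v =>
        gLo_updHi_ne K Y _ _ _ _ (by simp)
      simp_rw [PK_succ, PK_self, restK_update, hF', gHi_updHi, hl]
      rw [← Finset.sum_mul, ← Finset.mul_sum, mHi_sum hP]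
      have : ∀ v : Y ((j : ℕ) + 1), restK K Y P j s * WK K Y P j (gLo K Y j s) v *
          (F s * if v = y then 1 else 0) =
          if v = y then restK K Y P j s * (F s * WK K Y P j (gLo K Y j s) v) else 0 := fun v => by
        split_ifs <;> simp; ring
      refine (Finset.sum_congr rfl fun v _ => this v).trans ?_
      rw [Finset.sum_ite_eq' Finset.univ y]
      simp
    · intro s i v hi
      have : idxLo K j ≠ i := by rintro rfl; simp [idxLo] at hi
      rw [hF s i v hi]
      unfold gLo
      rw [Function.update_of_ne this]
  · intro s i v hi
    have : idxHi K j ≠ i := by rintro rfl; simp [idxHi] at hi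
    rw [hF s i v (by omega)]
    unfold gHi
    rw [Function.update_of_ne this]

end Markov

section MultiHop

set_option linter.unusedSectionVars false

variable (K : ℕ) (Y : ℕ → Type) [∀ i, Fintype (Y i)] [∀ i, Nonempty (Y i)]
variable (P : (∀ i : Fin (K + 1), Y i) → ℝ)

/-- Source sequences. -/
abbrev YS (n : ℕ) : Type := ∀ i : Fin (K + 1), Fin n → Y i

/-- Sequence `j + 1`. -/
def gHn {n : ℕ} (j : Fin K) (ys : YS K Y n) : Fin n → Y ((j : ℕ) + 1) := ys (idxHi K j)

/-- Transposition. -/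
def trE (n : ℕ) : YS K Y n ≃ (Fin n → ∀ i : Fin (K + 1), Y i) :=
  Equiv.piComm (fun (i : Fin (K + 1)) (_ : Fin n) => Y i)

theorem pe_equiv {Ω Ω' α : Type*} [Fintype Ω] [Fintype Ω'] (e : Ω ≃ Ω') (p : Ω' → ℝ) (Z : Ω' → α)
    (z : α) : probEq (fun ω => p (e ω)) (fun ω => Z (e ω)) z = probEq p Z z := by
  classical
  unfold probEq
  exact Equiv.sum_comp e (fun ω => if Z ω = z then p ω else 0)

theorem iidK_pmf (hP : IsPMF P) (n : ℕ) : IsPMF (iidK K Y P n) := by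
  refine ⟨fun ys => Finset.prod_nonneg fun t _ => hP.1 _, ?_⟩
  rw [← (iid_pmf (n := n) hP).2]
  exact Equiv.sum_comp (trE K Y n) (fun ω => ∏ t, P (ω t))

/-- Marginal law of one sequence. -/
def wK (n : ℕ) (i : Fin (K + 1)) (v : Fin n → Y i) : ℝ := ∏ t, margK K Y P i (v t)

theorem wK_pmf (hP : IsPMF P) (n : ℕ) (i : Fin (K + 1)) : IsPMF (wK K Y P n i) :=
  iid_pmf (n := n) ⟨marg_nonneg hP i, marg_sum hP i⟩

theorem iidQK_eq (n : ℕ) (ys : YS K Y n) : iidQK K Y P n ys = ∏ i, wK K Y P n i (ys i) := by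
  unfold iidQK prodMargK wK
  rw [Finset.prod_comm]

theorem iidQK_pmf (hP : IsPMF P) (n : ℕ) : IsPMF (iidQK K Y P n) := by
  classical
  refine ⟨fun ys => ?_, ?_⟩
  · rw [iidQK_eq]
    exact Finset.prod_nonneg fun i _ => (wK_pmf K Y P hP n i).1 _
  · simp_rw [iidQK_eq]
    rw [← Fintype.piFinset_univ, ← Finset.prod_univ_sum]
    simp_rw [(wK_pmf K Y P hP n _).2]
    simp

theorem iid_ac (hP : IsPMF P) (n : ℕ) (ys : YS K Y n) (h : 0 < iidK K Y P n ys) :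
    0 < iidQK K Y P n ys := by
  unfold iidQK prodMargK
  refine Finset.prod_pos fun t _ => Finset.prod_pos fun i _ => ?_
  have : 0 < P (fun i => ys i t) := by
    refine (hP.1 _).lt_of_ne fun h0 => h.ne' ?_
    exact Finset.prod_eq_zero (Finset.mem_univ t) h0.symm
  rw [margK_eq]
  exact pe_pos hP.1 (fun y => y i) this

theorem indepQ (hP : IsPMF P) (n : ℕ) (i : Fin (K + 1)) {α : Type*} (Z : YS K Y n → α)
    (hZ : ∀ (ys : YS K Y n) (v : Fin n → Y i), Z (Function.update ys i v) = Z ys)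
    (v : Fin n → Y i) (z : α) :
    probEq (iidQK K Y P n) (fun ys => (ys i, Z ys)) (v, z) =
      wK K Y P n i v * probEq (iidQK K Y P n) Z z := by
  classical
  have e1 : probEq (iidQK K Y P n) (fun ys => (ys i, Z ys)) (v, z) =
      ∑ ys : YS K Y n, (∏ i, wK K Y P n i (ys i)) *
        ((if ys i = v then 1 else 0) * (if Z ys = z then 1 else 0)) := by
    unfold probEq
    refine Finset.sum_congr rfl fun ys _ => ?_
    rw [iidQK_eq]
    by_cases h1 : ys i = v <;> by_cases h2 : Z ys = z <;> simp [h1, h2]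
  have e2 : probEq (iidQK K Y P n) Z z =
      ∑ ys : YS K Y n, (∏ i, wK K Y P n i (ys i)) * (if Z ys = z then 1 else 0) := by
    unfold probEq
    refine Finset.sum_congr rfl fun ys _ => ?_
    rw [iidQK_eq]
    by_cases h2 : Z ys = z <;> simp [h2]
  rw [e1, e2, resample (wK K Y P n) i (wK_pmf K Y P hP n i).2, Finset.mul_sum]
  refine Finset.sum_congr rfl fun ys _ => ?_
  simp_rw [hZ, Function.update_self]
  rw [mul_left_comm]
  congr 1
  simp

theorem margQ (hP : IsPMF P) (n : ℕ) (i : Fin (K + 1)) (v : Fin n → Y i) :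
    probEq (iidQK K Y P n) (fun ys => ys i) v = wK K Y P n i v := by
  have := indepQ K Y P hP n i (fun _ => ()) (fun _ _ => rfl) v ()
  have h1 : probEq (iidQK K Y P n) (fun _ => ()) () = 1 := by
    unfold probEq
    simp [(iidQK_pmf K Y P hP n).2]
  rw [h1, mul_one] at this
  rw [← this]
  refine pe_congr _ fun ys => ?_
  simp

theorem margP (n : ℕ) (i : Fin (K + 1)) (v : Fin n → Y i) :
    probEq (iidK K Y P n) (fun ys => ys i) v = wK K Y P n i v := by
  have := pe_iid (n := n) P (fun y => y i) v
  have e := pe_equiv (trE K Y n) (fun ω => ∏ t, P (ω t)) (fun ω t => ω t i) v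
  exact e.trans this

theorem msg_dep (n : ℕ) (φ : ∀ ℓ : ℕ, (Fin n → Y ℓ) → ℕ → ℕ) (ys ys' : YS K Y n) (ℓ : ℕ)
    (h : ∀ i : Fin (K + 1), i.val ≤ ℓ → ys i = ys' i) :
    msgRec Y n φ (extendTup K Y n ys) ℓ = msgRec Y n φ (extendTup K Y n ys') ℓ := by
  have he : ∀ k ≤ ℓ, extendTup K Y n ys k = extendTup K Y n ys' k := by
    intro k hk
    unfold extendTup
    split_ifs with h1
    · exact h ⟨k, h1⟩ hk
    · rfl
  have : ∀ k ≤ ℓ, msgRec Y n φ (extendTup K Y n ys) k = msgRec Y n φ (extendTup K Y n ys') k := by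
    intro k
    induction k with
    | zero => intro hk; simp only [msgRec]; rw [he 0 hk]
    | succ k ih => intro hk; simp only [msgRec]; rw [he _ hk, ih (by omega)]
  exact this ℓ le_rfl

theorem extend_hi (n : ℕ) (j : Fin K) (ys : YS K Y n) :
    extendTup K Y n ys (j.val + 1) = gHn K Y j ys := by
  unfold extendTup
  rw [dif_pos (Nat.succ_lt_succ j.isLt)]
  rfl

variable {K Y P}

theorem hopK (hP : IsPMF P) (hK : 0 < K) (hMC : IsMarkovChainK K Y P) (j : Fin K) {R : ℝ}
    (hR : 0 ≤ R) {ε : ℝ} (hε : 0 < ε) :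
    ∃ δ : ℝ, 0 < δ ∧ ∀ (n : ℕ) (_ : 0 < n) (p : YS K Y n → ℝ) (_ : IsPMF p) (B : ℝ)
      (_ : B ≤ n * δ) (_ : ∀ ys, p ys ≤ Real.exp B * iidK K Y P n ys)
      (M : YS K Y n → ℕ) (_ : ∀ ys, (M ys : ℝ) + 1 ≤ 2 ^ ((n : ℝ) * R))
      (_ : ∀ ys ys' : YS K Y n, (∀ i : Fin (K + 1), i.val ≤ j.val → ys i = ys' i) → M ys = M ys'),
      ∑ ys, p ys * Real.log (probEq p (fun ys => (gHn K Y j ys, M ys)) (gHn K Y j ys, M ys) /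
        ((∏ t, mHi K Y P j (gHn K Y j ys t)) * probEq p M (M ys))) ≤
        n * (Real.log 2 * etaK K Y P j R + ε) := by
  classical
  obtain ⟨δ, hδ, H⟩ := (srcK hP j).hop hR hε
  refine ⟨δ, hδ, ?_⟩
  intro n hn p hp B hB hpq M hM hdep
  let C : Type := ∀ i : {i : Fin (K + 1) // i.val ≤ j.val}, Y i.1
  let c : (∀ i : Fin (K + 1), Y i) → C := fun s i => s i.1
  let a' : C → Y (j : ℕ) := fun γ => γ ⟨idxLo K j, le_refl _⟩
  have hac : ∀ s, a' (c s) = gLo K Y j s := fun s => rfl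
  let N := ⌊(2 : ℝ) ^ ((n : ℝ) * R)⌋₊
  have hMN : ∀ ys, M ys < N := fun ys => by
    have h1 : M ys + 1 ≤ N := Nat.le_floor (by push_cast; exact hM ys)
    exact h1
  let bk : (Fin n → C) → YS K Y n := fun γ i t =>
    if h : i.val ≤ j.val then γ t ⟨i, h⟩ else Classical.arbitrary (Y i)
  let m : (Fin n → C) → Fin N := fun γ => ⟨M (bk γ), hMN _⟩
  have hm : ∀ ys : YS K Y n, (m (fun t => c (trE K Y n ys t))).val = M ys := fun ys => by
    refine hdep _ _ fun i hi => ?_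
    funext t
    simp only [bk, hi, dif_pos]
    rfl
  have hpow : (0 : ℝ) < 2 ^ ((n : ℝ) * R) := by positivity
  have hN : Real.log N ≤ n * (R * Real.log 2) := by
    rcases Nat.eq_zero_or_pos N with h0 | h0
    · rw [h0]; simp
      have := Real.log_pos one_lt_two
      positivity
    · have : Real.log N ≤ Real.log (2 ^ ((n : ℝ) * R)) :=
        Real.log_le_log (by exact_mod_cast h0) (Nat.floor_le hpow.le)
      rw [Real.log_rpow two_pos] at this
      linarith
  let p' : (Fin n → ∀ i : Fin (K + 1), Y i) → ℝ := fun ω => p ((trE K Y n).symm ω)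
  have hp' : IsPMF p' := ⟨fun ω => hp.1 _, by
    rw [← hp.2]; exact Equiv.sum_comp (trE K Y n).symm p⟩
  have key := H (∀ i : Fin (K + 1), Y i) C P hP a' (gHi K Y j) c
    (fun x y => (pairMargK_eq K Y P j x y).symm) ?_ n hn p' hp' B hB
    (fun ω => hpq ((trE K Y n).symm ω)) N m hN
  · refine le_trans (le_of_eq ?_) key
    rw [← Equiv.sum_comp (trE K Y n)]
    refine Finset.sum_congr rfl fun ys _ => ?_
    have ep : ∀ ys, p' (trE K Y n ys) = p ys := fun ys => by
      simp only [p', Equiv.symm_apply_apply]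
    have ep' : (fun ys => p' (trE K Y n ys)) = p := funext ep
    have l1 : probEq p' (fun ω => ((fun i => gHi K Y j (ω i)), m (fun i => c (ω i))))
        ((fun i => gHi K Y j (trE K Y n ys i)), m (fun i => c (trE K Y n ys i))) =
        probEq p (fun ys => (gHn K Y j ys, M ys)) (gHn K Y j ys, M ys) := by
      rw [← pe_equiv (trE K Y n), ep']
      refine pe_congr p fun ys' => ?_
      rw [Prod.mk.injEq, Prod.mk.injEq, Fin.ext_iff, hm, hm]
      exact Iff.rfl
    have l2 : probEq p' (fun ω => m (fun i => c (ω i))) (m (fun i => c (trE K Y n ys i))) =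
        probEq p M (M ys) := by
      rw [← pe_equiv (trE K Y n), ep']
      refine pe_congr p fun ys' => ?_
      rw [Fin.ext_iff, hm, hm]
    rw [ep, l1, l2]
    rfl
  · intro g y
    refine markov_hyp hP hK hMC j (fun s => g (c s)) ?_ y
    intro s i v hi
    congr 1
    funext i'
    have : i'.1 ≠ i := fun h => by
      have := i'.2
      rw [h] at this
      omega
    exact Function.update_of_ne this v s

/-- The law of a decision or message under the two hypotheses. -/
def TK {n : ℕ} {β : Type*} (p q : YS K Y n → ℝ) (D : YS K Y n → β) : ℝ :=
  ∑ ys, p ys * Real.log (probEq p D (D ys) / probEq q D (D ys))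

theorem step_hop (hP : IsPMF P) {n : ℕ} (φ : ∀ ℓ : ℕ, (Fin n → Y ℓ) → ℕ → ℕ)
    {p : YS K Y n → ℝ} (hp : IsPMF p) (hpq : ∀ ys, 0 < p ys → 0 < iidQK K Y P n ys) (j : Fin K)
    {β : Type*} (D : YS K Y n → β)
    (hD : ∀ ys ys', gHn K Y j ys = gHn K Y j ys' →
      msgRec Y n φ (extendTup K Y n ys) j.val = msgRec Y n φ (extendTup K Y n ys') j.val →
      D ys = D ys') {A : ℝ}
    (hA : ∑ ys, p ys * Real.log (probEq p
        (fun ys => (gHn K Y j ys, msgRec Y n φ (extendTup K Y n ys) j.val))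
        (gHn K Y j ys, msgRec Y n φ (extendTup K Y n ys) j.val) /
        ((∏ t, mHi K Y P j (gHn K Y j ys t)) *
          probEq p (fun ys => msgRec Y n φ (extendTup K Y n ys) j.val)
            (msgRec Y n φ (extendTup K Y n ys) j.val))) ≤ A) :
    TK p (iidQK K Y P n) D ≤
      A + TK p (iidQK K Y P n) (fun ys => msgRec Y n φ (extendTup K Y n ys) j.val) := by
  classical
  have hq := iidQK_pmf K Y P hP n
  set M : YS K Y n → ℕ := fun ys => msgRec Y n φ (extendTup K Y n ys) j.val with hM
  have d := data_proc hp hq hpq (fun ys => (gHn K Y j ys, M ys)) D (fun ys ys' h => by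
    rw [Prod.mk.injEq] at h
    exact hD ys ys' h.1 h.2)
  have ind : ∀ ys, probEq (iidQK K Y P n) (fun ys => (gHn K Y j ys, M ys)) (gHn K Y j ys, M ys) =
      (∏ t, mHi K Y P j (gHn K Y j ys t)) * probEq (iidQK K Y P n) M (M ys) := fun ys =>
    indepQ K Y P hP n (idxHi K j) M (fun ys v => msg_dep K Y n φ _ _ _ fun i hi =>
      Function.update_of_ne (by rintro rfl; simp [idxHi] at hi) _ _) _ _
  have pos1 : ∀ ys, 0 < p ys → 0 < probEq p (fun ys => (gHn K Y j ys, M ys))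
    (gHn K Y j ys, M ys) := fun ys h => pe_pos hp.1 (fun ys => (gHn K Y j ys, M ys)) h
  have pos2 : ∀ ys, 0 < p ys → 0 < probEq (iidQK K Y P n) (fun ys => (gHn K Y j ys, M ys))
    (gHn K Y j ys, M ys) := fun ys h => pe_pos hq.1 (fun ys => (gHn K Y j ys, M ys)) (hpq ys h)
  have pos3 : ∀ ys, 0 < p ys → 0 < probEq p M (M ys) := fun ys h => pe_pos hp.1 M h
  have pos4 : ∀ ys, 0 < p ys → 0 < probEq (iidQK K Y P n) M (M ys) := fun ys h =>
    pe_pos hq.1 M (hpq ys h)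
  have pos5 : ∀ ys, 0 < p ys → 0 < ∏ t, mHi K Y P j (gHn K Y j ys t) := fun ys h => by
    have := pos2 ys h
    rw [ind] at this
    exact (pos_iff_pos_of_mul_pos this).mpr (pos4 ys h)
  refine d.trans ?_
  simp_rw [ind]
  unfold TK
  rw [sum_log_div hp.1 _ _ pos1 (fun ys h => mul_pos (pos5 ys h) (pos3 ys h)),
    sum_log_mul hp.1 _ _ pos5 pos3] at hA
  rw [sum_log_div hp.1 _ _ pos1 (fun ys h => mul_pos (pos5 ys h) (pos4 ys h)),
    sum_log_mul hp.1 _ _ pos5 pos4, sum_log_div hp.1 _ _ pos3 pos4]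
  linarith

theorem multi (hP : IsPMF P) {n : ℕ} (φ : ∀ ℓ : ℕ, (Fin n → Y ℓ) → ℕ → ℕ)
    {p : YS K Y n → ℝ} (hp : IsPMF p) {B : ℝ}
    (hpq : ∀ ys, p ys ≤ Real.exp B * iidK K Y P n ys) (A : Fin K → ℝ)
    (hA : ∀ j : Fin K, ∑ ys, p ys * Real.log (probEq p
        (fun ys => (gHn K Y j ys, msgRec Y n φ (extendTup K Y n ys) j.val))
        (gHn K Y j ys, msgRec Y n φ (extendTup K Y n ys) j.val) /
        ((∏ t, mHi K Y P j (gHn K Y j ys t)) *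
          probEq p (fun ys => msgRec Y n φ (extendTup K Y n ys) j.val)
            (msgRec Y n φ (extendTup K Y n ys) j.val))) ≤ A j)
    (g : ∀ m : ℕ, (Fin n → Y m) → ℕ → Bool) (j : Fin K)
    (hsupp : ∀ ys, 0 < p ys → g ((j : ℕ) + 1) (extendTup K Y n ys ((j : ℕ) + 1))
        (msgRec Y n φ (extendTup K Y n ys) (j : ℕ)) = false) :
    0 < betaK K Y P n φ g j ∧
    Real.log (1 / betaK K Y P n φ g j) ≤ B + ∑ l ∈ Finset.Iic j, A l := by
  classical
  have hq := iidQK_pmf K Y P hP n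
  have ac : ∀ ys, 0 < p ys → 0 < iidQK K Y P n ys := fun ys h =>
    iid_ac K Y P hP n ys ((pos_iff_pos_of_mul_pos (h.trans_le (hpq ys))).mp (Real.exp_pos _))
  have T0 : TK p (iidQK K Y P n) (fun ys => msgRec Y n φ (extendTup K Y n ys) 0) ≤ B := by
    unfold TK
    have hB : ∑ ys, p ys * B = B := by rw [← Finset.sum_mul, hp.2, one_mul]
    rw [← hB]
    set M : YS K Y n → ℕ := fun ys => msgRec Y n φ (extendTup K Y n ys) 0 with hM
    refine sum_log_mono hp.1 fun ys h => ?_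
    have h1 : 0 < probEq p M (M ys) := pe_pos hp.1 M h
    have h2 : 0 < probEq (iidQK K Y P n) M (M ys) := pe_pos hq.1 M (ac ys h)
    rw [Real.log_le_iff_le_exp (div_pos h1 h2), div_le_iff₀ h2]
    refine (pe_mono hpq M (M ys)).trans (le_of_eq ?_)
    congr 1
    have e : M = fun ys => (fun v : Fin n → Y 0 => φ 0 v 0) (ys 0) := by
      funext ys
      simp only [hM, msgRec]
      rfl
    rw [e]
    have c1 := pe_comp (iidK K Y P n) (fun ys : YS K Y n => ys 0)
      (fun v : Fin n → Y 0 => φ 0 v 0)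
    have c2 := pe_comp (iidQK K Y P n) (fun ys : YS K Y n => ys 0)
      (fun v : Fin n → Y 0 => φ 0 v 0)
    have c3 : probEq (iidK K Y P n) (fun ys : YS K Y n => ys 0) =
        probEq (iidQK K Y P n) (fun ys : YS K Y n => ys 0) := by
      funext v
      rw [margP, margQ K Y P hP]
    refine (c1 _).symm.trans (Eq.trans ?_ (c2 _))
    rw [c3]
  have T : ∀ k (hk : k < K), TK p (iidQK K Y P n)
      (fun ys => msgRec Y n φ (extendTup K Y n ys) k) ≤ B + ∑ l ∈ Finset.Iio ⟨k, hk⟩, A l := by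
    intro k
    induction k with
    | zero =>
      intro hk
      have : Finset.Iio (⟨0, hk⟩ : Fin K) = ∅ := by
        ext i; simp [Fin.lt_def]
      rw [this]
      simpa using T0
    | succ k ih =>
      intro hk
      have hk' : k < K := by omega
      have e : Finset.Iio (⟨k + 1, hk⟩ : Fin K) = insert ⟨k, hk'⟩ (Finset.Iio ⟨k, hk'⟩) := by
        ext i
        simp only [Finset.mem_Iio, Finset.mem_insert, Fin.lt_def, Fin.ext_iff]
        omega
      rw [e, Finset.sum_insert (by simp)]
      have := step_hop hP φ hp ac ⟨k, hk'⟩ (fun ys => msgRec Y n φ (extendTup K Y n ys) (k + 1))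
        (fun ys ys' h1 h2 => by
          simp only [msgRec]
          have e1 := extend_hi K Y n ⟨k, hk'⟩ ys
          have e2 := extend_hi K Y n ⟨k, hk'⟩ ys'
          simp only at e1 e2 h2
          rw [e1, e2, h1, h2]) (hA ⟨k, hk'⟩)
      have := ih hk'
      simp only at *
      linarith
  have fin := step_hop hP φ hp ac j (fun ys => g ((j : ℕ) + 1) (extendTup K Y n ys ((j : ℕ) + 1))
        (msgRec Y n φ (extendTup K Y n ys) (j : ℕ))) (fun ys ys' h1 h2 => by
          rw [extend_hi, extend_hi, h1, h2]) (hA j)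
  have Tj := T j.val j.isLt
  set D : YS K Y n → Bool := fun ys => g ((j : ℕ) + 1) (extendTup K Y n ys ((j : ℕ) + 1))
        (msgRec Y n φ (extendTup K Y n ys) (j : ℕ)) with hD
  have hβ : betaK K Y P n φ g j = probEq (iidQK K Y P n) D false := by
    unfold betaK probEq
    refine Finset.sum_congr rfl fun ys _ => ?_
    congr
  have h1 : probEq p D false = 1 := by
    rw [← hp.2]
    unfold probEq
    refine Finset.sum_congr rfl fun ys _ => ?_
    split_ifs with h
    · rfl
    · by_contra hne
      exact h (hsupp ys ((hp.1 ys).lt_of_ne hne))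
  obtain ⟨ys0, hy0, hy1⟩ := pe_exists (p := p) (X := D) (a := false) (by rw [h1]; norm_num) hp.1
  refine ⟨?_, ?_⟩
  · rw [hβ, ← hy1]
    exact pe_pos hq.1 D (ac ys0 hy0)
  · have e : TK p (iidQK K Y P n) D = Real.log (1 / betaK K Y P n φ g j) := by
      unfold TK
      rw [hβ, ← one_mul (Real.log (1 / _)), ← hp.2, Finset.sum_mul]
      refine sum_log_congr hp.1 fun ys h => ?_
      have : D ys = false := hsupp ys h
      rw [this, h1, hp.2]
    rw [← e, ← Finset.Iio_insert, Finset.sum_insert (by simp)]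
    linarith

end MultiHop

section Final

variable {K : ℕ} {Y : ℕ → Type} [∀ i, Fintype (Y i)] [∀ i, Nonempty (Y i)]
  {P : (∀ i : Fin (K + 1), Y i) → ℝ}

theorem alpha_eq (n : ℕ) (φ : ∀ ℓ : ℕ, (Fin n → Y ℓ) → ℕ → ℕ)
    (g : ∀ m : ℕ, (Fin n → Y m) → ℕ → Bool) (j : Fin K) :
    alphaK K Y P n φ g j = probEq (iidK K Y P n) (fun ys => g ((j : ℕ) + 1)
      (extendTup K Y n ys ((j : ℕ) + 1)) (msgRec Y n φ (extendTup K Y n ys) (j : ℕ))) true := by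
  unfold alphaK probEq
  refine Finset.sum_congr rfl fun ys _ => ?_
  congr

theorem beta_eq (n : ℕ) (φ : ∀ ℓ : ℕ, (Fin n → Y ℓ) → ℕ → ℕ)
    (g : ∀ m : ℕ, (Fin n → Y m) → ℕ → Bool) (j : Fin K) :
    betaK K Y P n φ g j = probEq (iidQK K Y P n) (fun ys => g ((j : ℕ) + 1)
      (extendTup K Y n ys ((j : ℕ) + 1)) (msgRec Y n φ (extendTup K Y n ys) (j : ℕ))) false := by
  unfold betaK probEq
  refine Finset.sum_congr rfl fun ys _ => ?_
  congr

/-- conditioning a pmf on the event that a binary variable is `false` -/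
theorem cond_pmf {Ω : Type*} [Fintype Ω] {q : Ω → ℝ} (hq : IsPMF q) (D : Ω → Bool) {c : ℝ}
    (hc : 0 < c) (h : probEq q D true ≤ 1 - c) :
    ∃ p : Ω → ℝ, IsPMF p ∧ (∀ ω, p ω ≤ Real.exp (-Real.log c) * q ω) ∧
      ∀ ω, 0 < p ω → D ω = false := by
  classical
  set s : ℝ := ∑ ω, if D ω = false then q ω else 0 with hs
  have hsum : probEq q D true + s = 1 := by
    rw [hs, ← hq.2]
    unfold probEq
    rw [← Finset.sum_add_distrib]
    refine Finset.sum_congr rfl fun ω _ => ?_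
    cases D ω <;> simp
  have hsc : c ≤ s := by linarith
  have hs0 : 0 < s := hc.trans_le hsc
  refine ⟨fun ω => (if D ω = false then q ω else 0) / s, ⟨fun ω => ?_, ?_⟩, fun ω => ?_,
    fun ω hω => ?_⟩
  · have := hq.1 ω
    simp only
    split_ifs <;> positivity
  · rw [← Finset.sum_div, ← hs, div_self hs0.ne']
  · have := hq.1 ω
    rw [Real.exp_neg, Real.exp_log hc]
    have h1 : (if D ω = false then q ω else 0) ≤ q ω := by split_ifs <;> simp [this]
    rw [inv_mul_eq_div]
    exact div_le_div₀ this h1 hc hsc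
  · by_contra hne
    simp [hne] at hω

theorem single_bound (hP : IsPMF P) (hK : 0 < K) (hMC : IsMarkovChainK K Y P)
    (Rr : Fin K → ℝ) (hR : ∀ j, 0 ≤ Rr j) {c : ℝ} (hc : 0 < c) {e : ℝ} (he : 0 < e) (j : Fin K) :
    ∃ N : ℕ, ∀ n, N ≤ n → 0 < n ∧ ∀ (φ : ∀ ℓ : ℕ, (Fin n → Y ℓ) → ℕ → ℕ)
      (g : ∀ m : ℕ, (Fin n → Y m) → ℕ → Bool),
      (∀ l : Fin K, ∀ ys : YS K Y n, ((msgRec Y n φ (extendTup K Y n ys) (l : ℕ) : ℕ) : ℝ) + 1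
          ≤ 2 ^ ((n : ℝ) * Rr l)) →
      alphaK K Y P n φ g j ≤ 1 - c →
      0 < betaK K Y P n φ g j ∧ Real.log (1 / betaK K Y P n φ g j) ≤
        n * (e + ∑ l ∈ Finset.Iic j, (Real.log 2 * etaK K Y P l (Rr l) + e)) := by
  choose δ hδ hop using fun l => hopK hP hK hMC l (hR l) he
  have ev : ∀ᶠ n : ℕ in atTop, 0 < n ∧ (∀ l, -Real.log c ≤ n * δ l) ∧ -Real.log c ≤ n * e := by
    refine (eventually_gt_atTop 0).and (Eventually.and ?_ ?_)
    · rw [eventually_all]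
      intro l
      exact (tendsto_natCast_atTop_atTop.atTop_mul_const (hδ l)).eventually_ge_atTop _
    · exact (tendsto_natCast_atTop_atTop.atTop_mul_const he).eventually_ge_atTop _
  obtain ⟨N, hN⟩ := eventually_atTop.mp ev
  refine ⟨N, fun n hn => ?_⟩
  obtain ⟨h0, h1, h2⟩ := hN n hn
  refine ⟨h0, fun φ g hlen hα => ?_⟩
  rw [alpha_eq] at hα
  obtain ⟨p, hp, hpq, hsupp⟩ := cond_pmf (iidK_pmf K Y P hP n) _ hc hα
  have := multi hP φ hp hpq (fun l => n * (Real.log 2 * etaK K Y P l (Rr l) + e))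
    (fun l => hop l n h0 p hp _ (h1 l) hpq (fun ys => msgRec Y n φ (extendTup K Y n ys) l.val)
      (hlen l) (fun ys ys' h => msg_dep K Y n φ ys ys' l.val h)) g j hsupp
  refine ⟨this.1, this.2.trans ?_⟩
  rw [← Finset.mul_sum, mul_add]
  linarith

end Final

theorem khop_main
    (K : ℕ) (hK : 2 ≤ K) (Y : ℕ → Type) [∀ i, Fintype (Y i)] [∀ i, Nonempty (Y i)]
    (P : (∀ i : Fin (K + 1), Y i) → ℝ) (hP : IsPMF P) (hMC : IsMarkovChainK K Y P)
    (Rr : Fin K → ℝ) (hR : ∀ j, 0 ≤ Rr j)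
    (εr : Fin K → ℝ) (hε : ∀ j, 0 ≤ εr j ∧ εr j < 1)
    (θ : Fin K → ℝ) (hach : achievableK K Y P Rr εr θ) :
    ∀ j : Fin K, θ j ≤ ∑ l ∈ Finset.Iic j, etaK K Y P l (Rr l) := by
  intro j
  obtain ⟨φ, g, hlen, hα, hθ⟩ := hach
  have hl2 : 0 < Real.log 2 := Real.log_pos (by norm_num)
  have hc : 0 < (1 - εr j) / 2 := by linarith [(hε j).2]
  have hαev : ∀ᶠ n in atTop, alphaK K Y P n (φ n) (g n) j < 1 - (1 - εr j) / 2 := by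
    refine eventually_lt_of_limsup_lt ((hα j).trans_lt (by linarith)) ?_
    refine isBoundedUnder_of ⟨1, fun n => ?_⟩
    rw [alpha_eq]
    exact pe_le_one (iidK_pmf K Y P hP n) _ _
  set m : ℝ := ((Finset.Iic j).card : ℝ) + 1 with hm
  have hm0 : 0 < m := by positivity
  refine le_of_forall_pos_le_add fun e' he' => ?_
  have he : 0 < e' * Real.log 2 / m := by positivity
  obtain ⟨N, hN⟩ := single_bound hP (by omega) hMC Rr hR hc he j
  refine (hθ j).trans ?_
  rw [liminf_eq]
  have hnn : ∀ n, 0 ≤ Real.logb 2 (1 / betaK K Y P n (φ n) (g n) j) / n := by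
    intro n
    refine div_nonneg ?_ (by positivity)
    unfold Real.logb
    refine div_nonneg ?_ hl2.le
    rw [one_div, Real.log_inv, beta_eq]
    have h1 := pe_le_one (iidQK_pmf K Y P hP n) (fun ys => g n ((j : ℕ) + 1)
      (extendTup K Y n ys ((j : ℕ) + 1)) (msgRec Y n (φ n) (extendTup K Y n ys) (j : ℕ))) false
    have h2 := pe_nonneg (iidQK_pmf K Y P hP n).1 (fun ys => g n ((j : ℕ) + 1)
      (extendTup K Y n ys ((j : ℕ) + 1)) (msgRec Y n (φ n) (extendTup K Y n ys) (j : ℕ))) false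
    linarith [Real.log_nonpos h2 h1]
  refine csSup_le ⟨0, Eventually.of_forall hnn⟩ fun b hb => ?_
  obtain ⟨n, ⟨hn1, hn2⟩, hn3⟩ := ((hb.and hαev).and (eventually_ge_atTop N)).exists
  refine hn1.trans ?_
  obtain ⟨h0, h⟩ := hN n hn3
  have h3 := (h (φ n) (g n) (hlen n) hn2.le).2
  have hn0 : (0 : ℝ) < n := by exact_mod_cast h0
  unfold Real.logb
  rw [div_div, div_le_iff₀ (by positivity)]
  refine h3.trans (le_of_eq ?_)
  rw [Finset.sum_add_distrib, ← Finset.mul_sum, Finset.sum_const, nsmul_eq_mul]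
  have : e' * Real.log 2 / m * m = e' * Real.log 2 := div_mul_cancel₀ _ hm0.ne'
  rw [hm] at this ⊢
  linear_combination (n : ℝ) * this

/-- strong converse for the `K`-hop testing-against-independence problem.
For every `K ≥ 2`, rates `R₁,…,R_K ≥ 0`, and type-I thresholds `ε₁,…,ε_K ∈ [0,1)`,
every `(ε₁,…,ε_K)`-achievable exponent tuple `(θ₁,…,θ_K)` satisfies
`θ_k ≤ ∑_{ℓ=1}^{k} η_ℓ(R_ℓ)` for every `k ∈ {1,…,K}`. -/
theorem khop_strong_converse
    (K : ℕ) (hK : 2 ≤ K) (Y : ℕ → Type) [∀ i, Fintype (Y i)] [∀ i, Nonempty (Y i)]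
    (P : (∀ i : Fin (K + 1), Y i) → ℝ) (hP : IsPMF P) (hMC : IsMarkovChainK K Y P)
    (Rr : Fin K → ℝ) (hR : ∀ j, 0 ≤ Rr j)
    (εr : Fin K → ℝ) (hε : ∀ j, 0 ≤ εr j ∧ εr j < 1)
    (θ : Fin K → ℝ) (hach : achievableK K Y P Rr εr θ) :
    ∀ j : Fin K, θ j ≤ ∑ l ∈ Finset.Iic j, etaK K Y P l (Rr l) := by
  exact khop_main K hK Y P hP hMC Rr hR εr hε θ hach
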